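/- For any constants ε, α, λ > 0 there exists a constant c > 0 such that the following holds: for every connected d-regular graph G = (V,E) with |V| = n vertices and d ≥ ε·log n, every source vertex s ∈ V, every number of agents |A| ≤ α·n, and every integer k ≥ 0, the broadcast times satisfy P[T_push(G,s) ≤ c·k] ≥ P[T_visitx(G,s) ≤ k] − n^{−λ}. -/

import Mathlib

/-!
Push is coupled with visit-exchange so that a vertex `u` informed in both protocols sends the rumor
along the edges used by the agents leaving `u`. In push, `u` sends one message per round, while in
visit-exchange several agents may leave `u` simultaneously; the delay of push is therefore measured
by a congestion counter (`counter`), which at an informed vertex grows by the number of departing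
agents, and which a newly informed vertex inherits from the vertex that informed it. Identifying the
successive departures from `u` with its successive push samples is an exchange of independent,
identically distributed noise coordinates, chosen adaptively. The resulting map of the joint noise
(`couple`) is injective and preserves weights, and under it a vertex informed in visit-exchange is
informed in push by the round given by its counter (`mem_pushInf_of_mem_visInf`). Hence the
probability that visit-exchange finishes within `k` rounds with all counters at most `L` is at most
the probability that push finishes within `L` rounds (`walksE_le_pushProbLe`).

The counters are of order `k + log n` because of an exponential moment: the sum over the informed
vertices of `exp (η * counter + (η + 1) * number of agents)` grows in expectation by at most a
constant factor per round (`pot_step`) as long as the number of agents in each neighbourhood is at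
most `β * d`. By stationarity and `d ≥ ε log n`, a violation of this in one of `k < n ^ 2` rounds
has probability at most `n ^ (-(lam + 1))`, for `β` large (`walksE_not_light`).

The additive `log n` is absorbed since the informed set of push at most doubles per round: push has
no chance to finish within fewer than `log₂ n` rounds, so if `c * k` is below `log₂ n`, the
comparison can be made with the largest number of rounds below `log₂ n` instead. For `k ≥ n ^ 2` a
crude bound on push alone (`pushProbLe_ge`) suffices.
-/

open Finset
open scoped Classical ENNReal

noncomputable section

namespace Rumor

variable {V : Type*} {A : Type*}

/-- Probability weight of `u` as a uniformly random neighbor of `v` in `G`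
(`1/deg v` if `u` is a neighbor of `v`, and `0` otherwise). -/
def nbrW [Fintype V] (G : SimpleGraph V) (v u : V) : ℝ :=
  if G.Adj v u then 1 / (G.degree v : ℝ) else 0

/-- Probability weight of a lazy simple random walk step from `v` to `u`
(stay put with probability `1/2`, otherwise move to a uniform neighbor). -/
def lazyW [Fintype V] (G : SimpleGraph V) (v u : V) : ℝ :=
  if u = v then 1 / 2 else if G.Adj v u then 1 / (2 * (G.degree v : ℝ)) else 0

/-- Stationary distribution of the simple random walk on `G`:
vertex `v` has probability `deg v / (2 |E|)`. -/
def statW [Fintype V] (G : SimpleGraph V) (v : V) : ℝ :=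
  (G.degree v : ℝ) / ∑ u : V, (G.degree u : ℝ)

/-- Informed vertices of the PUSH protocol with source `s` after `t` rounds,
when in round `t+1` each vertex `u` sends the rumor to the vertex `σ t u`. -/
def pushInf (s : V) (σ : ℕ → V → V) : ℕ → Set V
  | 0 => {s}
  | t + 1 => pushInf s σ t ∪ (σ t) '' pushInf s σ t

/-- Informed vertices of the PUSH-PULL protocol with source `s` after `t` rounds,
when in round `t+1` each vertex `u` contacts the vertex `σ t u`. -/
def ppullInf (s : V) (σ : ℕ → V → V) : ℕ → Set V
  | 0 => {s}
  | t + 1 => ppullInf s σ t ∪ (σ t) '' ppullInf s σ t ∪ {v | σ t v ∈ ppullInf s σ t}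

/-- Extend finite-horizon driving noise to all times (by the identity). -/
def extV {k : ℕ} (σ : Fin k → V → V) : ℕ → V → V :=
  fun t => if h : t < k then σ ⟨t, h⟩ else id

/-- `P[T_push(G,s) ≤ k]`: the probability that all vertices are informed within `k`
rounds of the PUSH protocol on `G` with source `s`, where in each round every vertex
samples an independent uniformly random neighbor. -/
def pushProbLe [Fintype V] (G : SimpleGraph V) (s : V) (k : ℕ) : ℝ :=
  ∑ σ : Fin k → V → V,
    if pushInf s (extV σ) k = Set.univ then ∏ t : Fin k, ∏ v : V, nbrW G v (σ t v) else 0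

/-- `P[T_ppull(G,s) ≤ k]` for the PUSH-PULL protocol. -/
def ppullProbLe [Fintype V] (G : SimpleGraph V) (s : V) (k : ℕ) : ℝ :=
  ∑ σ : Fin k → V → V,
    if ppullInf s (extV σ) k = Set.univ then ∏ t : Fin k, ∏ v : V, nbrW G v (σ t v) else 0

/-- Position after `t` steps of the walk of agent `g`, started at `x0 g`, where at
round `t+1` the agent moves from its current position `v` to `σ t g v`. -/
def walk (x0 : A → V) (σ : ℕ → A → V → V) (g : A) : ℕ → V
  | 0 => x0 g
  | t + 1 => σ t g (walk x0 σ g t)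

/-- Extend finite-horizon driving noise for the agents to all times. -/
def extAV {k : ℕ} (σ : Fin k → A → V → V) : ℕ → A → V → V :=
  fun t => if h : t < k then σ ⟨t, h⟩ else fun _ => id

/-- Probability of the event `E` on the trajectories (up to time `k`) of independent
simple random walks on `G`, one for each agent in `A`, each started from an independent
sample of the stationary distribution. -/
def walksProb [Fintype V] [Fintype A] (G : SimpleGraph V) (k : ℕ)
    (E : (A → ℕ → V) → Prop) : ℝ :=
  ∑ x0 : A → V, ∑ σ : Fin k → A → V → V,
    if E (walk x0 (extAV σ)) then
      (∏ g : A, statW G (x0 g)) * ∏ t : Fin k, ∏ g : A, ∏ v : V, nbrW G v (σ t g v)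
    else 0

/-- Probability of the event `E` on the trajectories (up to time `k`) of independent
*lazy* simple random walks on `G`, one for each agent in `A`, each started from an
independent sample of the stationary distribution. -/
def walksLazyProb [Fintype V] [Fintype A] (G : SimpleGraph V) (k : ℕ)
    (E : (A → ℕ → V) → Prop) : ℝ :=
  ∑ x0 : A → V, ∑ σ : Fin k → A → V → V,
    if E (walk x0 (extAV σ)) then
      (∏ g : A, statW G (x0 g)) * ∏ t : Fin k, ∏ g : A, ∏ v : V, lazyW G v (σ t g v)
    else 0

/-- The pair (informed vertices, informed agents) of VISIT-EXCHANGE with source `s`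
after `t` rounds, given agent trajectories `x`. -/
def vxInf (s : V) (x : A → ℕ → V) : ℕ → Set V × Set A
  | 0 => ({s}, {g | x g 0 = s})
  | t + 1 =>
      let p := vxInf s x t
      (p.1 ∪ {v | ∃ g ∈ p.2, x g (t + 1) = v},
       p.2 ∪ {g | x g (t + 1) ∈ p.1 ∪ {v | ∃ g' ∈ p.2, x g' (t + 1) = v}})

/-- `P[T_visitx(G,s) ≤ k]`: probability that all vertices are informed within `k` rounds
of VISIT-EXCHANGE on `G` with source `s` and `a` agents. -/
def vxProbLe [Fintype V] (G : SimpleGraph V) (s : V) (a k : ℕ) : ℝ :=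
  walksProb (A := Fin a) G k fun x => (vxInf s x k).1 = Set.univ

/-- The pair (informed agents, "the source has already informed some agent") of
MEET-EXCHANGE with source `s` after `t` rounds, given agent trajectories `x`. -/
def mxInf (s : V) (x : A → ℕ → V) : ℕ → Set A × Prop
  | 0 => ({g | x g 0 = s}, ∃ g, x g 0 = s)
  | t + 1 =>
      let p := mxInf s x t
      (p.1 ∪ {g | ∃ g' ∈ p.1, x g' (t + 1) = x g (t + 1)} ∪ {g | ¬p.2 ∧ x g (t + 1) = s},
       p.2 ∨ ∃ g, x g (t + 1) = s)

/-- `P[T_meetx(G,s) ≤ k]`: probability that all agents are informed within `k` rounds of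
MEET-EXCHANGE on `G` with source `s` and `a` agents (non-lazy walks). -/
def mxProbLe [Fintype V] (G : SimpleGraph V) (s : V) (a k : ℕ) : ℝ :=
  walksProb (A := Fin a) G k fun x => (mxInf s x k).1 = Set.univ

/-- `P[T_meetx(G,s) ≤ k]` for MEET-EXCHANGE with lazy walks. -/
def mxLazyProbLe [Fintype V] (G : SimpleGraph V) (s : V) (a k : ℕ) : ℝ :=
  walksLazyProb (A := Fin a) G k fun x => (mxInf s x k).1 = Set.univ

/-- `E[T_push(G,s)] = ∑_{k≥0} P[T_push > k]`. -/
def pushET [Fintype V] (G : SimpleGraph V) (s : V) : ℝ≥0∞ :=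
  ∑' k : ℕ, ENNReal.ofReal (1 - pushProbLe G s k)

/-- `E[T_ppull(G,s)] = ∑_{k≥0} P[T_ppull > k]`. -/
def ppullET [Fintype V] (G : SimpleGraph V) (s : V) : ℝ≥0∞ :=
  ∑' k : ℕ, ENNReal.ofReal (1 - ppullProbLe G s k)

/-- `E[T_visitx(G,s)] = ∑_{k≥0} P[T_visitx > k]` with `a` agents. -/
def vxET [Fintype V] (G : SimpleGraph V) (s : V) (a : ℕ) : ℝ≥0∞ :=
  ∑' k : ℕ, ENNReal.ofReal (1 - vxProbLe G s a k)

/-- `E[T_meetx(G,s)] = ∑_{k≥0} P[T_meetx > k]` with `a` agents. -/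
def mxET [Fintype V] (G : SimpleGraph V) (s : V) (a : ℕ) : ℝ≥0∞ :=
  ∑' k : ℕ, ENNReal.ofReal (1 - mxProbLe G s a k)

end Rumor

namespace Rumor

/-! ### Neighbour sampling -/

section Kernel

variable {V : Type} [Fintype V] {G : SimpleGraph V} {d : ℕ}

lemma nbrW_nonneg (G : SimpleGraph V) (v u : V) : 0 ≤ nbrW G v u := by
  unfold nbrW; split_ifs <;> positivity

lemma nbrW_symm (hd : G.IsRegularOfDegree d) (v u : V) : nbrW G v u = nbrW G u v := by
  unfold nbrW
  rw [hd v, hd u, G.adj_comm]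

lemma nbrW_eq (hd : G.IsRegularOfDegree d) (v u : V) :
    nbrW G v u = if G.Adj v u then 1 / (d : ℝ) else 0 := by
  unfold nbrW; rw [hd v]

lemma sum_nbrW (hd : G.IsRegularOfDegree d) (hd0 : 0 < d) (v : V) :
    ∑ u, nbrW G v u = 1 := by
  simp only [nbrW_eq hd]
  rw [← Finset.sum_filter, Finset.sum_const, ← SimpleGraph.neighborFinset_eq_filter,
    SimpleGraph.card_neighborFinset_eq_degree, hd v]
  have : (d : ℝ) ≠ 0 := by positivity
  simp [this]

lemma sum_nbrW_left (hd : G.IsRegularOfDegree d) (hd0 : 0 < d) (u : V) :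
    ∑ v, nbrW G v u = 1 := by
  rw [← sum_nbrW hd hd0 u]
  exact Finset.sum_congr rfl fun v _ => nbrW_symm hd v u

lemma sum_prod_nbrW_apply (hd : G.IsRegularOfDegree d) (hd0 : 0 < d) (y : V) (φ : V → ℝ) :
    ∑ ρ : V → V, (∏ v, nbrW G v (ρ v)) * φ (ρ y) = ∑ u, nbrW G y u * φ u := by
  have h1 : ∀ ρ : V → V, (∏ v, nbrW G v (ρ v)) * φ (ρ y) =
      ∏ v, (nbrW G v (ρ v) * if v = y then φ (ρ v) else 1) := by
    intro ρ
    rw [Finset.prod_mul_distrib]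
    simp
  simp only [h1]
  rw [← Fintype.prod_sum (fun v u => nbrW G v u * if v = y then φ u else 1),
    Finset.prod_eq_single y]
  · simp
  · intro v _ hv
    simp [hv, sum_nbrW hd hd0 v]
  · simp

lemma sum_prod_nbrW (hd : G.IsRegularOfDegree d) (hd0 : 0 < d) :
    ∑ ρ : V → V, (∏ v, nbrW G v (ρ v)) = 1 := by
  rw [← Fintype.prod_sum (fun v u => nbrW G v u)]
  simp [sum_nbrW hd hd0]

lemma sum_noise {ι : Type} [Fintype ι] [DecidableEq ι] (hd : G.IsRegularOfDegree d) (hd0 : 0 < d) :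
    ∑ σ : ι → V → V, (∏ i, ∏ v, nbrW G v (σ i v)) = 1 := by
  rw [← Fintype.prod_sum (fun (_ : ι) (ρ : V → V) => ∏ v, nbrW G v (ρ v))]
  simp [sum_prod_nbrW hd hd0]

/-- Independence of the agents in one round: the expectation of a product of functions, one for
the new position of each agent, is the product of the one-step expectations. -/
lemma sum_step_prod {A : Type} [Fintype A] [DecidableEq A] (hd : G.IsRegularOfDegree d) (hd0 : 0 < d)
    (y : A → V) (φ : A → V → ℝ) :
    ∑ τ : A → V → V, (∏ g, ∏ v, nbrW G v (τ g v)) * ∏ g, φ g (τ g (y g)) =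
      ∏ g, ∑ u, nbrW G (y g) u * φ g u := by
  simp only [← Finset.prod_mul_distrib]
  rw [← Fintype.prod_sum (fun g (ρ : V → V) => (∏ v, nbrW G v (ρ v)) * φ g (ρ (y g)))]
  exact Finset.prod_congr rfl fun g _ => sum_prod_nbrW_apply hd hd0 (y g) (φ g)

end Kernel

/-! ### A crude bound for push -/

section PushDirect

variable {V : Type} [Fintype V] {G : SimpleGraph V} {d : ℕ}

lemma pushInf_congr {V : Type} (s : V) {σ σ' : ℕ → V → V} {t : ℕ} (h : ∀ i < t, σ i = σ' i) :
    pushInf s σ t = pushInf s σ' t := by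
  induction t with
  | zero => rfl
  | succ t ih =>
    simp only [pushInf]
    rw [ih fun i hi => h i (by omega), h t (by omega)]

lemma pushInf_snoc {V : Type} (s : V) {t : ℕ} (σ : Fin t → V → V) (ρ : V → V) :
    pushInf s (extV (Fin.snoc σ ρ : Fin (t + 1) → V → V)) (t + 1) =
      pushInf s (extV σ) t ∪ ρ '' pushInf s (extV σ) t := by
  have h1 : pushInf s (extV (Fin.snoc σ ρ : Fin (t + 1) → V → V)) t = pushInf s (extV σ) t := by
    apply pushInf_congr
    intro i hi
    have : i < t + 1 := by omega
    simp [extV, hi, this, Fin.snoc]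
  have h2 : extV (Fin.snoc σ ρ : Fin (t + 1) → V → V) t = ρ := by
    simp [extV, Fin.snoc]
  simp only [pushInf, h1, h2]

lemma pushInf_mono {V : Type} (s : V) (σ : ℕ → V → V) {t t' : ℕ} (h : t ≤ t') :
    pushInf s σ t ⊆ pushInf s σ t' := by
  induction t', h using Nat.le_induction with
  | base => exact subset_rfl
  | succ m _ ih => exact ih.trans Set.subset_union_left

lemma pushInf_ncard_le (s : V) (σ : ℕ → V → V) (t : ℕ) : (pushInf s σ t).ncard ≤ 2 ^ t := by
  induction t with
  | zero => simp [pushInf]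
  | succ t ih =>
    have h1 := Set.ncard_union_le (pushInf s σ t) (σ t '' pushInf s σ t)
    have h2 := Set.ncard_image_le (f := σ t) (Set.toFinite (pushInf s σ t))
    simp only [pushInf, pow_succ]
    omega

lemma pushProbLe_eq_zero (s : V) {t : ℕ} (h : 2 ^ t < Fintype.card V) : pushProbLe G s t = 0 := by
  unfold pushProbLe
  apply Finset.sum_eq_zero
  intro σ _
  rw [if_neg]
  intro hu
  have := pushInf_ncard_le s (extV σ) t
  rw [hu, Set.ncard_univ, Nat.card_eq_fintype_card] at this
  omega

lemma pushProbLe_nonneg (s : V) (t : ℕ) : 0 ≤ pushProbLe G s t := by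
  unfold pushProbLe
  refine Finset.sum_nonneg fun σ _ => ?_
  split_ifs
  · exact Finset.prod_nonneg fun i _ => Finset.prod_nonneg fun v _ => nbrW_nonneg G _ _
  · exact le_rfl

lemma exists_adj_boundary {V : Type} {G : SimpleGraph V} (hG : G.Connected) {I : Set V}
    (hne : I.Nonempty) (hI : I ≠ Set.univ) :
    ∃ u ∈ I, ∃ v ∉ I, G.Adj u v := by
  obtain ⟨a, ha⟩ := hne
  obtain ⟨b, hb⟩ := (Set.ne_univ_iff_exists_notMem I).1 hI
  obtain ⟨p⟩ := hG.preconnected a b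
  obtain ⟨e, _, h1, h2⟩ := p.exists_boundary_dart I ha hb
  exact ⟨_, h1, _, h2, e.adj⟩

/-- The potential `2 ^ (-|informed|)`, killed once everybody is informed. -/
def pushPot (I : Set V) : ℝ := if I = Set.univ then 0 else (1 / 2 : ℝ) ^ I.ncard

/-- Some edge leaves the informed set `I`, and with probability at least `1 / d` it is used in the
next round, which halves the potential. -/
lemma pushPot_step (hG : G.Connected) (hd : G.IsRegularOfDegree d) (hd0 : 0 < d)
    (I : Set V) (hne : I.Nonempty) :
    ∑ ρ : V → V, (∏ v, nbrW G v (ρ v)) * pushPot (I ∪ ρ '' I) ≤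
      (1 - 1 / (2 * (d : ℝ))) * pushPot I := by
  by_cases hI : I = Set.univ
  · subst hI; simp [pushPot]
  obtain ⟨u, hu, v, hv, huv⟩ := exists_adj_boundary hG hne hI
  have hb : ∀ ρ : V → V, pushPot (I ∪ ρ '' I) ≤ pushPot I * (1 - if ρ u = v then 1 / 2 else 0) := by
    intro ρ
    have hle : pushPot (I ∪ ρ '' I) ≤ (1 / 2 : ℝ) ^ (I ∪ ρ '' I).ncard := by
      unfold pushPot; split_ifs
      · positivity
      · exact le_rfl
    refine hle.trans ?_
    simp only [pushPot, hI, if_false]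
    split_ifs with h
    · have : I.ncard + 1 ≤ (I ∪ ρ '' I).ncard := by
        rw [← Set.ncard_insert_of_notMem hv]
        apply Set.ncard_le_ncard _ (Set.toFinite _)
        rw [Set.insert_subset_iff]
        exact ⟨Or.inr ⟨u, hu, h⟩, Set.subset_union_left⟩
      calc (1 / 2 : ℝ) ^ (I ∪ ρ '' I).ncard ≤ (1 / 2) ^ (I.ncard + 1) :=
            pow_le_pow_of_le_one (by norm_num) (by norm_num) this
        _ = _ := by rw [pow_succ]; ring
    · have : I.ncard ≤ (I ∪ ρ '' I).ncard :=
        Set.ncard_le_ncard Set.subset_union_left (Set.toFinite _)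
      simpa using pow_le_pow_of_le_one (by norm_num : (0 : ℝ) ≤ 1 / 2) (by norm_num) this
  calc ∑ ρ : V → V, (∏ v, nbrW G v (ρ v)) * pushPot (I ∪ ρ '' I)
      ≤ ∑ ρ : V → V, (∏ v, nbrW G v (ρ v)) *
          (pushPot I * (1 - if ρ u = v then 1 / 2 else 0)) :=
        Finset.sum_le_sum fun ρ _ => mul_le_mul_of_nonneg_left (hb ρ)
          (Finset.prod_nonneg fun v _ => nbrW_nonneg G _ _)
    _ = ∑ w, nbrW G u w * (pushPot I * (1 - if w = v then 1 / 2 else 0)) :=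
        sum_prod_nbrW_apply hd hd0 u (fun w => pushPot I * (1 - if w = v then 1 / 2 else 0))
    _ = (1 - 1 / (2 * (d : ℝ))) * pushPot I := by
        have : ∀ w, nbrW G u w * (pushPot I * (1 - if w = v then 1 / 2 else 0)) =
            pushPot I * (nbrW G u w - if w = v then nbrW G u v / 2 else 0) := by
          intro w; split_ifs with h
          · subst h; ring
          · ring
        simp only [this]
        rw [← Finset.mul_sum, Finset.sum_sub_distrib, sum_nbrW hd hd0]
        simp only [Finset.sum_ite_eq', Finset.mem_univ, if_true, nbrW_eq hd, huv]
        field_simp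

lemma pushPot_bound (hG : G.Connected) (hd : G.IsRegularOfDegree d) (hd0 : 0 < d) (s : V) (t : ℕ) :
    ∑ σ : Fin t → V → V, (∏ i, ∏ v, nbrW G v (σ i v)) * pushPot (pushInf s (extV σ) t) ≤
      (1 - 1 / (2 * (d : ℝ))) ^ t := by
  have hd1 : (1 : ℝ) ≤ d := by exact_mod_cast hd0
  have hr : 0 ≤ 1 - 1 / (2 * (d : ℝ)) := by
    rw [sub_nonneg, div_le_one (by positivity)]; linarith
  induction t with
  | zero =>
    simp only [pushInf, pushPot, pow_zero, Set.ncard_singleton]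
    simp only [Finset.univ_eq_empty, Finset.prod_empty, one_mul, Finset.sum_const]
    simp only [Finset.card_univ, Fintype.card_unique, one_smul]
    split_ifs <;> norm_num
  | succ t ih =>
    rw [← Equiv.sum_comp (Fin.snocEquiv fun _ : Fin (t + 1) => V → V), Fintype.sum_prod_type_right]
    have : ∀ σ : Fin t → V → V, ∀ ρ : V → V,
        (∏ i, ∏ v, nbrW G v ((Fin.snocEquiv fun _ : Fin (t + 1) => V → V) (ρ, σ) i v)) *
          pushPot (pushInf s (extV ((Fin.snocEquiv fun _ : Fin (t + 1) => V → V) (ρ, σ))) (t + 1)) =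
        (∏ i, ∏ v, nbrW G v (σ i v)) * ((∏ v, nbrW G v (ρ v)) *
          pushPot (pushInf s (extV σ) t ∪ ρ '' pushInf s (extV σ) t)) := by
      intro σ ρ
      rw [← pushInf_snoc, Fin.prod_univ_castSucc, ← mul_assoc]
      simp only [Fin.snocEquiv, Equiv.coe_fn_mk, Fin.snoc_castSucc, Fin.snoc_last]
    simp only [this]
    simp only [← Finset.mul_sum]
    calc _ ≤ ∑ σ : Fin t → V → V, (∏ i, ∏ v, nbrW G v (σ i v)) *
          ((1 - 1 / (2 * (d : ℝ))) * pushPot (pushInf s (extV σ) t)) := by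
          refine Finset.sum_le_sum fun σ _ => mul_le_mul_of_nonneg_left ?_
            (Finset.prod_nonneg fun i _ => Finset.prod_nonneg fun v _ => nbrW_nonneg G _ _)
          exact pushPot_step hG hd hd0 _ ⟨s, pushInf_mono s _ (Nat.zero_le t) rfl⟩
      _ = (1 - 1 / (2 * (d : ℝ))) * ∑ σ : Fin t → V → V, (∏ i, ∏ v, nbrW G v (σ i v)) *
          (pushPot (pushInf s (extV σ) t)) := by
          rw [Finset.mul_sum]; exact Finset.sum_congr rfl fun σ _ => by ring
      _ ≤ _ := by
          rw [pow_succ']; exact mul_le_mul_of_nonneg_left ih hr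

/-- A crude bound, useful only for times of order at least `n ^ 2`. -/
lemma pushProbLe_ge (hG : G.Connected) (hd : G.IsRegularOfDegree d) (hd0 : 0 < d) (s : V) (t : ℕ) :
    1 - 2 ^ Fintype.card V * (1 - 1 / (2 * (d : ℝ))) ^ t ≤ pushProbLe G s t := by
  have h0 := pushPot_bound hG hd hd0 s t
  have hpt : ∀ σ : Fin t → V → V, (∏ i, ∏ v, nbrW G v (σ i v)) ≤
      (if pushInf s (extV σ) t = Set.univ then ∏ i, ∏ v, nbrW G v (σ i v) else 0) +
      2 ^ Fintype.card V *
        ((∏ i, ∏ v, nbrW G v (σ i v)) * pushPot (pushInf s (extV σ) t)) := by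
    intro σ
    have hw : 0 ≤ ∏ i, ∏ v, nbrW G v (σ i v) :=
      Finset.prod_nonneg fun i _ => Finset.prod_nonneg fun v _ => nbrW_nonneg G _ _
    unfold pushPot
    split_ifs with h
    · simp
    · have h1 : (pushInf s (extV σ) t).ncard ≤ Fintype.card V := by
        rw [← Nat.card_eq_fintype_card, ← Set.ncard_univ]
        exact Set.ncard_le_ncard (Set.subset_univ _) (Set.toFinite _)
      have h2 : (1 : ℝ) ≤ 2 ^ Fintype.card V * (1 / 2) ^ (pushInf s (extV σ) t).ncard := by
        calc (1 : ℝ) = 2 ^ Fintype.card V * (1 / 2) ^ Fintype.card V := by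
              rw [← mul_pow]; norm_num
          _ ≤ _ := by
              gcongr 2 ^ _ * ?_
              exact pow_le_pow_of_le_one (by norm_num) (by norm_num) h1
      nlinarith
  have hs := Finset.sum_le_sum fun σ (_ : σ ∈ Finset.univ) => hpt σ
  rw [sum_noise hd hd0, Finset.sum_add_distrib, ← Finset.mul_sum] at hs
  have h2 : (0 : ℝ) ≤ 2 ^ Fintype.card V := by positivity
  have := mul_le_mul_of_nonneg_left h0 h2
  unfold pushProbLe
  linarith

end PushDirect

end Rumor
namespace Rumor

/-! ### Expectations over independent walks -/

section Walks

variable {V A : Type} [Fintype V] [Fintype A] {G : SimpleGraph V} {d : ℕ}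

/-- Expectation of `F` over the trajectories, up to time `k`, of independent stationary walks. -/
def walksE (G : SimpleGraph V) (k : ℕ) (F : (A → ℕ → V) → ℝ) : ℝ :=
  ∑ x0 : A → V, ∑ σ : Fin k → A → V → V,
    ((∏ g : A, statW G (x0 g)) * ∏ t : Fin k, ∏ g : A, ∏ v : V, nbrW G v (σ t g v)) *
      F (walk x0 (extAV σ))

/-- The trajectory following `x` up to time `k` and sitting at `y` from time `k + 1` on. -/
def extendBy (x : A → ℕ → V) (k : ℕ) (y : A → V) : A → ℕ → V :=
  fun g t => if t ≤ k then x g t else y g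

lemma statW_nonneg (G : SimpleGraph V) (v : V) : 0 ≤ statW G v := by
  unfold statW; positivity

lemma statW_eq (hd : G.IsRegularOfDegree d) (hd0 : 0 < d) (v : V) :
    statW G v = 1 / (Fintype.card V : ℝ) := by
  unfold statW
  have : ∀ u, (G.degree u : ℝ) = d := fun u => by rw [hd u]
  simp only [this, Finset.sum_const, Finset.card_univ, nsmul_eq_mul]
  have : (d : ℝ) ≠ 0 := by positivity
  field_simp

lemma walksE_mono {k : ℕ} {F F' : (A → ℕ → V) → ℝ} (h : ∀ x, F x ≤ F' x) :
    walksE G k F ≤ walksE G k F' := by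
  unfold walksE
  refine Finset.sum_le_sum fun x0 _ => Finset.sum_le_sum fun σ _ =>
    mul_le_mul_of_nonneg_left (h _) (mul_nonneg ?_ ?_)
  · exact Finset.prod_nonneg fun g _ => statW_nonneg G _
  · exact Finset.prod_nonneg fun t _ => Finset.prod_nonneg fun g _ =>
      Finset.prod_nonneg fun v _ => nbrW_nonneg G _ _

lemma walksE_const_mul (k : ℕ) (r : ℝ) (F : (A → ℕ → V) → ℝ) :
    walksE G k (fun x => r * F x) = r * walksE G k F := by
  unfold walksE
  simp only [Finset.mul_sum]
  exact Finset.sum_congr rfl fun _ _ => Finset.sum_congr rfl fun _ _ => by ring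

lemma walksE_add (k : ℕ) (F F' : (A → ℕ → V) → ℝ) :
    walksE G k (fun x => F x + F' x) = walksE G k F + walksE G k F' := by
  unfold walksE
  simp only [mul_add, Finset.sum_add_distrib]

lemma walksE_sum {ι : Type} (k : ℕ) (T : Finset ι) (F : ι → (A → ℕ → V) → ℝ) :
    walksE G k (fun x => ∑ i ∈ T, F i x) = ∑ i ∈ T, walksE G k (F i) := by
  induction T using Finset.induction_on with
  | empty => simp [walksE]
  | insert i T hi ih =>
    simp only [Finset.sum_insert hi]
    rw [walksE_add, ih]

lemma walksProb_eq {a k : ℕ} (E : (Fin a → ℕ → V) → Prop) :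
    walksProb G k E = walksE G k fun x => if E x then 1 else 0 := by
  unfold walksProb walksE
  refine Finset.sum_congr rfl fun x0 _ => Finset.sum_congr rfl fun σ _ => ?_
  by_cases h : E (walk x0 (extAV σ)) <;> simp [h]

lemma walk_congr {V A : Type} (x0 : A → V) {σ σ' : ℕ → A → V → V} {t : ℕ}
    (h : ∀ i < t, σ i = σ' i) (g : A) : walk x0 σ g t = walk x0 σ' g t := by
  induction t with
  | zero => rfl
  | succ t ih =>
    simp only [walk]
    rw [ih fun i hi => h i (by omega), h t (by omega)]

lemma walk_snoc {V A : Type} (x0 : A → V) {k : ℕ} (σ : Fin k → A → V → V) (τ : A → V → V) :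
    walk x0 (extAV (Fin.snoc σ τ : Fin (k + 1) → A → V → V)) =
      extendBy (walk x0 (extAV σ)) k fun g => τ g (walk x0 (extAV σ) g k) := by
  have h1 : ∀ g, ∀ t ≤ k, walk x0 (extAV (Fin.snoc σ τ : Fin (k + 1) → A → V → V)) g t =
      walk x0 (extAV σ) g t := by
    intro g t ht
    apply walk_congr
    intro i hi
    have h1 : i < k := by omega
    have h2 : i < k + 1 := by omega
    simp [extAV, h1, h2, Fin.snoc]
  funext g t
  unfold extendBy
  split_ifs with ht
  · exact h1 g t ht
  · obtain ⟨m, rfl⟩ : ∃ m, t = k + 1 + m := ⟨t - (k + 1), by omega⟩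
    induction m with
    | zero =>
      simp only [walk, h1 g k le_rfl]
      simp [extAV, Fin.snoc]
    | succ m ih =>
      have : ¬ (k + 1 + m ≤ k) := by omega
      rw [← add_assoc]
      simp only [walk]
      rw [ih (by omega)]
      simp [extAV, this]

lemma walksE_succ (k : ℕ) (F : (A → ℕ → V) → ℝ) :
    walksE G (k + 1) F = walksE G k fun x =>
      ∑ τ : A → V → V, (∏ g, ∏ v, nbrW G v (τ g v)) * F (extendBy x k fun g => τ g (x g k)) := by
  unfold walksE
  refine Finset.sum_congr rfl fun x0 _ => ?_
  rw [← Equiv.sum_comp (Fin.snocEquiv fun _ : Fin (k + 1) => A → V → V),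
    Fintype.sum_prod_type_right]
  refine Finset.sum_congr rfl fun σ _ => ?_
  rw [Finset.mul_sum]
  refine Finset.sum_congr rfl fun τ _ => ?_
  rw [← walk_snoc, Fin.prod_univ_castSucc]
  simp only [Fin.snocEquiv, Equiv.coe_fn_mk, Fin.snoc_castSucc, Fin.snoc_last]
  ring

lemma walksE_zero_prod (hd : G.IsRegularOfDegree d) (hd0 : 0 < d) (φ : V → ℝ) :
    walksE (A := A) G 0 (fun x => ∏ g, φ (x g 0)) =
      ((∑ v, φ v) / Fintype.card V) ^ Fintype.card A := by
  unfold walksE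
  simp only [walk, Finset.univ_eq_empty, Finset.prod_empty, mul_one, Finset.sum_const,
    Finset.card_univ, Fintype.card_unique, one_smul, ← Finset.prod_mul_distrib]
  rw [← Fintype.prod_sum (fun (_ : A) v => statW G v * φ v)]
  simp only [statW_eq hd hd0, ← Finset.mul_sum, Finset.prod_const, Finset.card_univ]
  congr 1
  ring

/-- Stationarity, tested on product functions: at each time the positions of the agents are
independent and uniform. -/
lemma walksE_prod (hd : G.IsRegularOfDegree d) (hd0 : 0 < d) (k : ℕ) (φ : V → ℝ) :
    walksE (A := A) G k (fun x => ∏ g, φ (x g k)) =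
      ((∑ v, φ v) / Fintype.card V) ^ Fintype.card A := by
  induction k generalizing φ with
  | zero => exact walksE_zero_prod hd hd0 φ
  | succ k ih =>
    rw [walksE_succ]
    have : ∀ x : A → ℕ → V, ∑ τ : A → V → V, (∏ g, ∏ v, nbrW G v (τ g v)) *
        ∏ g, φ (extendBy x k (fun g => τ g (x g k)) g (k + 1)) =
        ∏ g, ∑ u, nbrW G (x g k) u * φ u := by
      intro x
      rw [← sum_step_prod hd hd0 (fun g => x g k) (fun _ => φ)]
      simp [extendBy]
    simp only [this]
    rw [ih fun v => ∑ u, nbrW G v u * φ u, Finset.sum_comm]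
    simp only [← Finset.sum_mul, sum_nbrW_left hd hd0, one_mul]

lemma walksE_one (hd : G.IsRegularOfDegree d) (hd0 : 0 < d) [Nonempty V] (k : ℕ) :
    walksE (A := A) G k (fun _ => 1) = 1 := by
  have := walksE_prod (A := A) hd hd0 k (fun _ => 1)
  simpa using this

/-- A function of the trajectory up to time `k` has the same expectation over the horizons `k`
and `k + m`. -/
lemma walksE_horizon (hd : G.IsRegularOfDegree d) (hd0 : 0 < d) (k m : ℕ)
    (F : (A → ℕ → V) → ℝ) (hF : ∀ x y, (∀ g, ∀ t ≤ k, x g t = y g t) → F x = F y) :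
    walksE G (k + m) F = walksE G k F := by
  induction m with
  | zero => rfl
  | succ m ih =>
    rw [← add_assoc, walksE_succ, ← ih]
    congr 1
    funext x
    have : ∀ y, F (extendBy x (k + m) y) = F x := fun y => by
      apply hF
      intro g t ht
      have : t ≤ k + m := by omega
      simp [extendBy, this]
    simp only [this]
    rw [← Finset.sum_mul]
    have := sum_noise (ι := A) hd hd0
    rw [this, one_mul]

end Walks

/-! ### Neighbourhood loads -/

section Load

variable {V A : Type} [Fintype V] [Fintype A] {G : SimpleGraph V} {d : ℕ}

/-- Expected number of agents arriving at `v` in the next round, given positions `y`; on a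
`d`-regular graph this is the number of agents on the neighbours of `v`, divided by `d`. -/
def load (G : SimpleGraph V) (y : A → V) (v : V) : ℝ := ∑ g, nbrW G (y g) v

lemma exp_le_one_add_two_mul {x : ℝ} (h0 : 0 ≤ x) (h1 : x ≤ 1) : Real.exp x ≤ 1 + 2 * x := by
  have h := Real.abs_exp_sub_one_le (x := x) (by rw [abs_of_nonneg h0]; exact h1)
  have h2 := (abs_le.1 h).2
  rw [abs_of_nonneg h0] at h2
  linarith

lemma walksE_load_exp (hd : G.IsRegularOfDegree d) (hd0 : 0 < d) [Nonempty V] {α : ℝ}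
    (hA : (Fintype.card A : ℝ) ≤ α * Fintype.card V) (k : ℕ) (v : V) :
    walksE (A := A) G k (fun x => Real.exp (d * load G (fun g => x g k) v)) ≤
      Real.exp (2 * α * d) := by
  have hd' : (0 : ℝ) < d := by exact_mod_cast hd0
  have hn : (0 : ℝ) < Fintype.card V := by exact_mod_cast Fintype.card_pos
  have : ∀ x : A → ℕ → V, Real.exp (d * load G (fun g => x g k) v) =
      ∏ g, Real.exp (d * nbrW G (x g k) v) := by
    intro x
    rw [load, Finset.mul_sum, Real.exp_sum]
  simp only [this]
  rw [walksE_prod hd hd0 k (fun u => Real.exp (d * nbrW G u v))]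
  have h1 : (∑ u, Real.exp (d * nbrW G u v)) / Fintype.card V ≤
      Real.exp (2 * d / Fintype.card V) := by
    have h2 : ∑ u, Real.exp (d * nbrW G u v) ≤ ∑ u, (1 + 2 * (d * nbrW G u v)) := by
      refine Finset.sum_le_sum fun u _ => exp_le_one_add_two_mul ?_ ?_
      · exact mul_nonneg hd'.le (nbrW_nonneg G _ _)
      · rw [nbrW_eq hd]; split_ifs
        · rw [mul_one_div_cancel hd'.ne']
        · simp
    rw [Finset.sum_add_distrib, ← Finset.mul_sum, ← Finset.mul_sum, sum_nbrW_left hd hd0] at h2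
    simp only [Finset.sum_const, Finset.card_univ, nsmul_eq_mul, mul_one] at h2
    rw [div_le_iff₀ hn]
    have h3 := Real.add_one_le_exp (2 * (d : ℝ) / Fintype.card V)
    calc _ ≤ _ := h2
      _ = (2 * (d : ℝ) / Fintype.card V + 1) * Fintype.card V := by field_simp; ring
      _ ≤ _ := by gcongr
  calc _ ≤ (Real.exp (2 * d / Fintype.card V)) ^ Fintype.card A := by
        apply pow_le_pow_left₀ _ h1
        positivity
    _ = Real.exp (Fintype.card A * (2 * d / Fintype.card V)) := by rw [← Real.exp_nat_mul]
    _ ≤ _ := by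
        apply Real.exp_le_exp.2
        calc (Fintype.card A : ℝ) * (2 * d / Fintype.card V)
            ≤ (α * Fintype.card V) * (2 * d / Fintype.card V) := by gcongr
          _ = _ := by field_simp

/-- The loads are at most `β` at all vertices. -/
def Light (G : SimpleGraph V) (β : ℝ) (y : A → V) : Prop := ∀ v, load G y v ≤ β

lemma walksE_not_light (hd : G.IsRegularOfDegree d) (hd0 : 0 < d) [Nonempty V] {α β : ℝ}
    (hA : (Fintype.card A : ℝ) ≤ α * Fintype.card V) (k : ℕ) :
    walksE (A := A) G k (fun x => if Light G β (fun g => x g k) then 0 else 1) ≤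
      Fintype.card V * Real.exp (-(β - 2 * α) * d) := by
  have hd' : (0 : ℝ) < d := by exact_mod_cast hd0
  calc _ ≤ walksE (A := A) G k (fun x => ∑ v, Real.exp (-(β * d)) *
          Real.exp (d * load G (fun g => x g k) v)) := by
        apply walksE_mono
        intro x
        split_ifs with h
        · positivity
        · unfold Light at h
          push Not at h
          obtain ⟨v, hv⟩ := h
          have h1 : 1 ≤ Real.exp (-(β * d)) * Real.exp (d * load G (fun g => x g k) v) := by
            rw [← Real.exp_add]
            apply Real.one_le_exp
            nlinarith
          exact h1.trans (Finset.single_le_sum (f := fun v => Real.exp (-(β * d)) *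
            Real.exp (d * load G (fun g => x g k) v)) (fun _ _ => by positivity)
            (Finset.mem_univ v))
    _ ≤ ∑ v : V, Real.exp (-(β * d)) * Real.exp (2 * α * d) := by
        rw [walksE_sum]
        refine Finset.sum_le_sum fun v _ => ?_
        rw [walksE_const_mul]
        gcongr
        exact walksE_load_exp hd hd0 hA k v
    _ = _ := by
        rw [Finset.sum_const, Finset.card_univ, nsmul_eq_mul, ← Real.exp_add]
        congr 2; ring

end Load

end Rumor
namespace Rumor

/-! ### Congestion counters of visit-exchange -/

section Counters

variable {V A : Type}

/-- Informed vertices of visit-exchange, without reference to informed agents: a vertex is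
informed next when some agent steps onto it from an informed vertex. -/
def visInf (s : V) (x : A → ℕ → V) : ℕ → Set V
  | 0 => {s}
  | t + 1 => visInf s x t ∪ {v | ∃ g, x g t ∈ visInf s x t ∧ x g (t + 1) = v}

lemma vxInf_eq (s : V) (x : A → ℕ → V) (t : ℕ) :
    (vxInf s x t).1 = visInf s x t ∧ (vxInf s x t).2 = {g | x g t ∈ visInf s x t} := by
  induction t with
  | zero => simp [vxInf, visInf]
  | succ t ih =>
    obtain ⟨h1, h2⟩ := ih
    have h3 : (vxInf s x (t + 1)).1 = visInf s x (t + 1) := by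
      simp only [vxInf, visInf, h1, h2, Set.mem_ofPred_eq]
    refine ⟨h3, ?_⟩
    have h4 : (vxInf s x (t + 1)).2 =
        (vxInf s x t).2 ∪ {g | x g (t + 1) ∈ (vxInf s x (t + 1)).1} := rfl
    rw [h4, h3, h2]
    apply Set.union_eq_right.2
    intro g hg
    exact Or.inr ⟨g, hg, rfl⟩

variable [Fintype A]

/-- Number of agents at `v` at time `t`. -/
def occ (x : A → ℕ → V) (t : ℕ) (v : V) : ℕ := #{g | x g t = v}

/-- The congestion counter. On an informed vertex it grows in each round by the number of agents
that leave it. A newly informed vertex inherits the updated counter of a vertex that informed it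
(the largest one, when there are several). The value at uninformed vertices is irrelevant. -/
def counter (s : V) (x : A → ℕ → V) : ℕ → V → ℕ
  | 0 => fun _ => 0
  | t + 1 => fun v =>
      if v ∈ visInf s x t then counter s x t v + occ x t v
      else ({g | x g t ∈ visInf s x t ∧ x g (t + 1) = v} : Finset A).sup
        fun g => counter s x t (x g t) + occ x t (x g t)

lemma visInf_congr {V A : Type} (s : V) {x y : A → ℕ → V} {t : ℕ} (h : ∀ g, ∀ i ≤ t, x g i = y g i) :
    visInf s x t = visInf s y t := by
  induction t with
  | zero => rfl
  | succ t ih =>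
    have h1 := ih fun g i hi => h g i (by omega)
    have h2 : ∀ g, x g t = y g t := fun g => h g t (by omega)
    have h3 : ∀ g, x g (t + 1) = y g (t + 1) := fun g => h g (t + 1) le_rfl
    simp only [visInf, h1, h2, h3]

lemma occ_congr {x y : A → ℕ → V} {t : ℕ} (h : ∀ g, x g t = y g t) : occ x t = occ y t := by
  funext v; simp only [occ, h]

lemma counter_congr (s : V) {x y : A → ℕ → V} {t : ℕ} (h : ∀ g, ∀ i ≤ t, x g i = y g i) :
    counter s x t = counter s y t := by
  induction t with
  | zero => rfl
  | succ t ih =>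
    have h1 := ih fun g i hi => h g i (by omega)
    have h2 : ∀ g, x g t = y g t := fun g => h g t (by omega)
    have h3 : ∀ g, x g (t + 1) = y g (t + 1) := fun g => h g (t + 1) le_rfl
    have h4 := visInf_congr s (x := x) (y := y) (t := t) fun g i hi => h g i (by omega)
    funext v
    simp only [counter, h1, h2, h3, h4, occ_congr h2]

end Counters

/-! ### The exponential moment of the counters -/

section Moment

variable {V A : Type} [Fintype V] [Fintype A] {G : SimpleGraph V} {d : ℕ}

/-- The potential `∑ exp (η * counter + (η + 1) * occ)` over the informed vertices. -/
def pot (η : ℝ) (s : V) (x : A → ℕ → V) (t : ℕ) : ℝ :=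
  ∑ v, if v ∈ visInf s x t then
    Real.exp (η * counter s x t v) * Real.exp ((η + 1) * occ x t v) else 0

lemma pot_nonneg (η : ℝ) (s : V) (x : A → ℕ → V) (t : ℕ) : 0 ≤ pot η s x t :=
  Finset.sum_nonneg fun v _ => by split_ifs <;> positivity

lemma exp_mul_occ {V : Type} (h : ℝ) (x : A → ℕ → V) (t : ℕ) (v : V) :
    Real.exp (h * occ x t v) = ∏ g, if x g t = v then Real.exp h else 1 := by
  rw [occ, Finset.prod_ite, Finset.prod_const, Finset.prod_const_one, mul_one, mul_comm,
    Real.exp_nat_mul]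

/-- One-step moment of the number of agents at `v`, for light loads. -/
lemma step_occ (hd : G.IsRegularOfDegree d) (hd0 : 0 < d) {h β : ℝ} (hh : 0 ≤ h)
    {y : A → V} (hy : Light G β y) (v : V) :
    ∑ τ : A → V → V, (∏ g, ∏ v, nbrW G v (τ g v)) *
      (∏ g, if τ g (y g) = v then Real.exp h else 1) ≤ Real.exp (Real.exp h * β) := by
  rw [sum_step_prod hd hd0 y (fun _ u => if u = v then Real.exp h else 1)]
  have he : 1 ≤ Real.exp h := Real.one_le_exp hh
  calc ∏ g, ∑ u, nbrW G (y g) u * (if u = v then Real.exp h else 1)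
      ≤ ∏ g, Real.exp (Real.exp h * nbrW G (y g) v) := by
        refine Finset.prod_le_prod (fun g _ => Finset.sum_nonneg fun u _ =>
          mul_nonneg (nbrW_nonneg G _ _) (by split_ifs <;> positivity)) fun g _ => ?_
        have h1 : ∀ u, nbrW G (y g) u * (if u = v then Real.exp h else 1) =
            nbrW G (y g) u + if u = v then nbrW G (y g) v * (Real.exp h - 1) else 0 := by
          intro u; split_ifs with huv
          · subst huv; ring
          · ring
        simp only [h1]
        rw [Finset.sum_add_distrib, sum_nbrW hd hd0]
        simp only [Finset.sum_ite_eq', Finset.mem_univ, if_true]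
        have h2 := Real.add_one_le_exp (Real.exp h * nbrW G (y g) v)
        have h3 := nbrW_nonneg G (y g) v
        linarith
    _ = Real.exp (Real.exp h * load G y v) := by
        rw [load, Finset.mul_sum, Real.exp_sum]
    _ ≤ _ := by
        apply Real.exp_le_exp.2
        exact mul_le_mul_of_nonneg_left (hy v) (by positivity)

/-- As `step_occ`, on the event that a given agent moves to `v`: this costs the probability of
that move and one more factor `exp h`. -/
lemma step_occ_agent (hd : G.IsRegularOfDegree d) (hd0 : 0 < d) {h β : ℝ} (hh : 0 ≤ h)
    {y : A → V} (hy : Light G β y) (v : V) (g₀ : A) :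
    ∑ τ : A → V → V, (∏ g, ∏ v, nbrW G v (τ g v)) *
      ((if τ g₀ (y g₀) = v then 1 else 0) *
        ∏ g, if τ g (y g) = v then Real.exp h else 1) ≤
      nbrW G (y g₀) v * (Real.exp h * Real.exp (Real.exp h * β)) := by
  have he : 1 ≤ Real.exp h := Real.one_le_exp hh
  have h1 : ∀ τ : A → V → V, ((if τ g₀ (y g₀) = v then 1 else 0) *
        ∏ g, if τ g (y g) = v then Real.exp h else 1) =
      ∏ g, (if g = g₀ then (if τ g (y g) = v then Real.exp h else 0) else
        (if τ g (y g) = v then Real.exp h else 1)) := by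
    intro τ
    rw [← Finset.mul_prod_erase _ _ (Finset.mem_univ g₀),
      ← Finset.mul_prod_erase _ _ (Finset.mem_univ g₀), ← mul_assoc]
    congr 1
    · by_cases h0 : τ g₀ (y g₀) = v <;> simp [h0]
    · refine Finset.prod_congr rfl fun g hg => ?_
      rw [if_neg (Finset.ne_of_mem_erase hg)]
  have h2 := step_occ hd hd0 hh hy v
  rw [sum_step_prod hd hd0 y (fun _ u => if u = v then Real.exp h else 1),
    ← Finset.mul_prod_erase _ _ (Finset.mem_univ g₀)] at h2
  simp only [h1]
  rw [sum_step_prod hd hd0 y (fun g u => if g = g₀ then (if u = v then Real.exp h else 0) else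
        (if u = v then Real.exp h else 1)),
    ← Finset.mul_prod_erase _ _ (Finset.mem_univ g₀)]
  have h3 : ∑ u, nbrW G (y g₀) u * (if g₀ = g₀ then (if u = v then Real.exp h else 0) else
        (if u = v then Real.exp h else 1)) = nbrW G (y g₀) v * Real.exp h := by
    simp
  have h4 : ∏ g ∈ Finset.univ.erase g₀, ∑ u, nbrW G (y g) u *
      (if g = g₀ then (if u = v then Real.exp h else 0) else
        (if u = v then Real.exp h else 1)) =
      ∏ g ∈ Finset.univ.erase g₀, ∑ u, nbrW G (y g) u * (if u = v then Real.exp h else 1) := by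
    refine Finset.prod_congr rfl fun g hg => ?_
    simp only [Finset.ne_of_mem_erase hg, if_false]
  rw [h3, h4]
  set P := ∏ g ∈ Finset.univ.erase g₀, ∑ u, nbrW G (y g) u * (if u = v then Real.exp h else 1)
  have hP : 0 ≤ P := Finset.prod_nonneg fun g _ => Finset.sum_nonneg fun u _ =>
    mul_nonneg (nbrW_nonneg G _ _) (by split_ifs <;> positivity)
  have h5 : 1 ≤ ∑ u, nbrW G (y g₀) u * (if u = v then Real.exp h else 1) := by
    refine (sum_nbrW hd hd0 (y g₀)).symm.le.trans ?_
    refine Finset.sum_le_sum fun u _ => le_mul_of_one_le_right (nbrW_nonneg G _ _) ?_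
    split_ifs <;> linarith
  have h6 : P ≤ Real.exp (Real.exp h * β) := (le_mul_of_one_le_left hP h5).trans h2
  rw [mul_assoc]
  exact mul_le_mul_of_nonneg_left (mul_le_mul_of_nonneg_left h6 (by positivity))
    (nbrW_nonneg G _ _)

/-- A newly set counter is attained at one of the arriving agents, so its exponential is at most
the sum of the exponentials over all agents arriving from informed vertices. -/
lemma exp_counter_succ_le {V : Type} (η : ℝ) (s : V) (x : A → ℕ → V) (t : ℕ) (v : V)
    (hv : v ∈ visInf s x (t + 1)) :
    Real.exp (η * counter s x (t + 1) v) ≤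
      (if v ∈ visInf s x t then Real.exp (η * (counter s x t v + occ x t v : ℕ)) else 0) +
      ∑ g, (if x g t ∈ visInf s x t then
        Real.exp (η * (counter s x t (x g t) + occ x t (x g t) : ℕ)) else 0) *
          (if x g (t + 1) = v then 1 else 0) := by
  have hnn : ∀ g ∈ (Finset.univ : Finset A), 0 ≤ (if x g t ∈ visInf s x t then
        Real.exp (η * (counter s x t (x g t) + occ x t (x g t) : ℕ)) else 0) *
          (if x g (t + 1) = v then (1 : ℝ) else 0) := fun g _ => by
    split_ifs <;> positivity
  by_cases h : v ∈ visInf s x t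
  · simp only [counter, h, if_true]
    exact le_add_of_nonneg_right (Finset.sum_nonneg hnn)
  · obtain ⟨g, hg⟩ : ∃ g, x g t ∈ visInf s x t ∧ x g (t + 1) = v := by
      rcases hv with hv | hv
      · exact absurd hv h
      · exact hv
    have hne : ({g | x g t ∈ visInf s x t ∧ x g (t + 1) = v} : Finset A).Nonempty :=
      ⟨g, by simpa using hg⟩
    obtain ⟨g₁, hg₁, he⟩ := Finset.exists_mem_eq_sup _ hne
      fun g => counter s x t (x g t) + occ x t (x g t)
    simp only [Finset.mem_filter, Finset.mem_univ, true_and] at hg₁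
    simp only [counter, h, if_false, zero_add]
    rw [he]
    refine le_trans ?_ (Finset.single_le_sum hnn (Finset.mem_univ g₁))
    simp [hg₁.1, hg₁.2]

lemma sum_agents_at (x : A → ℕ → V) (t : ℕ) (f : V → ℝ) :
    ∑ g, f (x g t) = ∑ v, (occ x t v : ℝ) * f v := by
  rw [← Finset.sum_fiberwise_of_maps_to (g := fun g => x g t) (t := Finset.univ) (by simp)]
  refine Finset.sum_congr rfl fun v _ => ?_
  rw [Finset.sum_congr rfl (g := fun _ => f v) (by intro g hg; simp at hg; rw [hg]),
    Finset.sum_const, nsmul_eq_mul, occ]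

/-- In a round with light loads the potential grows in expectation by at most a constant
factor. -/
lemma pot_step (hd : G.IsRegularOfDegree d) (hd0 : 0 < d) {η β : ℝ} (hη : 0 ≤ η)
    (s : V) (x : A → ℕ → V) (t : ℕ) (hy : Light G β fun g => x g t) :
    ∑ τ : A → V → V, (∏ g, ∏ v, nbrW G v (τ g v)) *
        pot η s (extendBy x t fun g => τ g (x g t)) (t + 1) ≤
      Real.exp (η + 1) * Real.exp (Real.exp (η + 1) * β) * pot η s x t := by
  set h := η + 1 with hh
  set M := Real.exp (Real.exp h * β) with hM
  have hh0 : 0 ≤ h := by linarith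
  -- `b v` is the exponential of the updated counter, restricted to informed vertices
  set b : V → ℝ := fun v => if v ∈ visInf s x t then
    Real.exp (η * (counter s x t v + occ x t v : ℕ)) else 0 with hb
  have hb0 : ∀ v, 0 ≤ b v := fun v => by simp only [hb]; split_ifs <;> positivity
  have hpt : ∀ τ : A → V → V, pot η s (extendBy x t fun g => τ g (x g t)) (t + 1) ≤
      ∑ v, (b v * (∏ g, if τ g (x g t) = v then Real.exp h else 1) +
        ∑ g₀, b (x g₀ t) * ((if τ g₀ (x g₀ t) = v then 1 else 0) *
          ∏ g, if τ g (x g t) = v then Real.exp h else 1)) := by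
    intro τ
    set x' := extendBy x t fun g => τ g (x g t) with hx'
    have e1 : ∀ g, ∀ i ≤ t, x' g i = x g i := fun g i hi => by simp [hx', extendBy, hi]
    have e2 : ∀ g, x' g (t + 1) = τ g (x g t) := fun g => by simp [hx', extendBy]
    have e3 := visInf_congr s e1
    have e4 := counter_congr s e1
    have e5 : ∀ g, x' g t = x g t := fun g => e1 g t le_rfl
    have e6 := occ_congr e5
    unfold pot
    refine Finset.sum_le_sum fun v _ => ?_
    have hprod : Real.exp ((η + 1) * occ x' (t + 1) v) =
        ∏ g, if τ g (x g t) = v then Real.exp h else 1 := by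
      rw [exp_mul_occ]; simp only [e2, hh]
    have hprod0 : 0 ≤ ∏ g, if τ g (x g t) = v then Real.exp h else 1 := by
      rw [← hprod]; positivity
    by_cases hv : v ∈ visInf s x' (t + 1)
    · rw [if_pos hv, hprod]
      have := exp_counter_succ_le η s x' t v hv
      simp only [e2, e3, e4, e5, e6] at this
      refine (mul_le_mul_of_nonneg_right this hprod0).trans (le_of_eq ?_)
      rw [add_mul, Finset.sum_mul]
      congr 1
      exact Finset.sum_congr rfl fun g _ => by rw [mul_assoc]
    · rw [if_neg hv]
      refine add_nonneg (mul_nonneg (hb0 v) hprod0) (Finset.sum_nonneg fun g _ =>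
        mul_nonneg (hb0 _) (mul_nonneg ?_ hprod0))
      split_ifs <;> norm_num
  calc _ ≤ ∑ τ : A → V → V, (∏ g, ∏ v, nbrW G v (τ g v)) *
        ∑ v, (b v * (∏ g, if τ g (x g t) = v then Real.exp h else 1) +
          ∑ g₀, b (x g₀ t) * ((if τ g₀ (x g₀ t) = v then 1 else 0) *
            ∏ g, if τ g (x g t) = v then Real.exp h else 1)) :=
        Finset.sum_le_sum fun τ _ => mul_le_mul_of_nonneg_left (hpt τ)
          (Finset.prod_nonneg fun g _ => Finset.prod_nonneg fun v _ => nbrW_nonneg G _ _)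
    _ = ∑ v, (b v * (∑ τ : A → V → V, (∏ g, ∏ v, nbrW G v (τ g v)) *
            (∏ g, if τ g (x g t) = v then Real.exp h else 1)) +
          ∑ g₀, b (x g₀ t) * ∑ τ : A → V → V, (∏ g, ∏ v, nbrW G v (τ g v)) *
            ((if τ g₀ (x g₀ t) = v then 1 else 0) *
            ∏ g, if τ g (x g t) = v then Real.exp h else 1)) := by
        simp only [Finset.mul_sum]
        rw [Finset.sum_comm]
        refine Finset.sum_congr rfl fun v _ => ?_
        simp only [mul_add, Finset.sum_add_distrib, Finset.mul_sum]
        congr 1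
        · exact Finset.sum_congr rfl fun _ _ => by ring
        · rw [Finset.sum_comm]
          exact Finset.sum_congr rfl fun _ _ => Finset.sum_congr rfl fun _ _ => by ring
    _ ≤ ∑ v, (b v * M + ∑ g₀, b (x g₀ t) * (nbrW G (x g₀ t) v * (Real.exp h * M))) := by
        refine Finset.sum_le_sum fun v _ => add_le_add ?_ (Finset.sum_le_sum fun g₀ _ => ?_)
        · exact mul_le_mul_of_nonneg_left (step_occ hd hd0 hh0 hy v) (hb0 v)
        · exact mul_le_mul_of_nonneg_left (step_occ_agent hd hd0 hh0 hy v g₀) (hb0 _)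
    _ = (∑ v, b v * M) + ∑ g₀, b (x g₀ t) * (Real.exp h * M) := by
        rw [Finset.sum_add_distrib]
        congr 1
        rw [Finset.sum_comm]
        refine Finset.sum_congr rfl fun g₀ _ => ?_
        rw [← Finset.mul_sum, ← Finset.sum_mul, sum_nbrW hd hd0, one_mul]
    _ = ∑ v, (b v * M + occ x t v * (b v * (Real.exp h * M))) := by
        rw [sum_agents_at x t fun u => b u * (Real.exp h * M), Finset.sum_add_distrib]
    _ ≤ ∑ v, Real.exp h * M * (if v ∈ visInf s x t then
          Real.exp (η * counter s x t v) * Real.exp ((η + 1) * occ x t v) else 0) := by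
        refine Finset.sum_le_sum fun v _ => ?_
        by_cases hv : v ∈ visInf s x t
        · simp only [hb, hv, if_true]
          have h1 : Real.exp (η * counter s x t v) * Real.exp ((η + 1) * occ x t v) =
              Real.exp (η * (counter s x t v + occ x t v : ℕ)) * Real.exp (occ x t v) := by
            rw [← Real.exp_add, ← Real.exp_add]; push_cast; congr 1; ring
          rw [h1]
          have h2 := Real.add_one_le_exp (occ x t v : ℝ)
          have h3 : 1 ≤ Real.exp h := Real.one_le_exp hh0
          have hM0 : 0 < M := by positivity
          set B := Real.exp (η * (counter s x t v + occ x t v : ℕ))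
          have hB : 0 < B := by positivity
          calc B * M + occ x t v * (B * (Real.exp h * M))
              ≤ B * (Real.exp h * M) + occ x t v * (B * (Real.exp h * M)) := by
                gcongr
                exact le_mul_of_one_le_left hM0.le h3
            _ = Real.exp h * M * (B * (occ x t v + 1)) := by ring
            _ ≤ _ := by gcongr
        · simp [hb, hv]
    _ = _ := by rw [← Finset.mul_sum]; rfl

/-- The trajectory has had light loads at all times before `t`. -/
def LightBefore (G : SimpleGraph V) (β : ℝ) (x : A → ℕ → V) (t : ℕ) : Prop :=
  ∀ i < t, Light G β fun g => x g i

lemma walksE_pot_le (hd : G.IsRegularOfDegree d) (hd0 : 0 < d) [Nonempty V] {η α β : ℝ}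
    (hη : 0 ≤ η) (hA : (Fintype.card A : ℝ) ≤ α * Fintype.card V) (s : V) (t : ℕ) :
    walksE (A := A) G t (fun x => if LightBefore G β x t then pot η s x t else 0) ≤
      Real.exp (Real.exp (η + 1) * α) *
        (Real.exp (η + 1) * Real.exp (Real.exp (η + 1) * β)) ^ t := by
  have hn : (0 : ℝ) < Fintype.card V := by exact_mod_cast Fintype.card_pos
  induction t with
  | zero =>
    have h0 : ∀ x : A → ℕ → V, (if LightBefore G β x 0 then pot η s x 0 else 0) =
        ∏ g, if x g 0 = s then Real.exp (η + 1) else 1 := by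
      intro x
      have : LightBefore G β x 0 := fun i hi => absurd hi (by omega)
      rw [if_pos this, ← exp_mul_occ]
      simp [pot, visInf, counter]
    simp only [h0]
    rw [walksE_zero_prod hd hd0 (fun u => if u = s then Real.exp (η + 1) else 1), pow_zero, mul_one]
    have h1 : (∑ u, if u = s then Real.exp (η + 1) else 1) / (Fintype.card V : ℝ) ≤
        Real.exp (Real.exp (η + 1) / Fintype.card V) := by
      have h2 : ∀ u, (if u = s then Real.exp (η + 1) else 1) =
          1 + if u = s then Real.exp (η + 1) - 1 else 0 := by
        intro u; split_ifs <;> ring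
      simp only [h2, Finset.sum_add_distrib, Finset.sum_ite_eq', Finset.mem_univ, if_true,
        Finset.sum_const, Finset.card_univ, nsmul_eq_mul, mul_one]
      rw [div_le_iff₀ hn]
      have h3 := Real.add_one_le_exp (Real.exp (η + 1) / Fintype.card V)
      calc (Fintype.card V : ℝ) + (Real.exp (η + 1) - 1)
          ≤ (Real.exp (η + 1) / Fintype.card V + 1) * Fintype.card V := by
            field_simp; linarith
        _ ≤ _ := by gcongr
    calc _ ≤ (Real.exp (Real.exp (η + 1) / Fintype.card V)) ^ Fintype.card A := by
          apply pow_le_pow_left₀ _ h1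
          refine div_nonneg (Finset.sum_nonneg fun u _ => ?_) hn.le
          split_ifs <;> positivity
      _ = Real.exp (Fintype.card A * (Real.exp (η + 1) / Fintype.card V)) := by
          rw [← Real.exp_nat_mul]
      _ ≤ _ := by
          apply Real.exp_le_exp.2
          calc (Fintype.card A : ℝ) * (Real.exp (η + 1) / Fintype.card V)
              ≤ (α * Fintype.card V) * (Real.exp (η + 1) / Fintype.card V) := by gcongr
            _ = _ := by field_simp
  | succ t ih =>
    rw [walksE_succ]
    set R := Real.exp (η + 1) * Real.exp (Real.exp (η + 1) * β)
    have hR : 0 ≤ R := by positivity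
    calc _ ≤ walksE (A := A) G t (fun x => R * if LightBefore G β x t then pot η s x t else 0) := by
          apply walksE_mono
          intro x
          have hl : ∀ y : A → V, LightBefore G β (extendBy x t y) (t + 1) ↔
              LightBefore G β x (t + 1) := by
            intro y
            refine forall_congr' fun i => forall_congr' fun hi => ?_
            have : i ≤ t := by omega
            simp [extendBy, this]
          simp only [hl]
          by_cases h1 : LightBefore G β x (t + 1)
          · have h2 : LightBefore G β x t := fun i hi => h1 i (by omega)
            simp only [h1, h2, if_true]
            exact pot_step hd hd0 hη s x t (h1 t (by omega))
          · simp only [h1, if_false, mul_zero, Finset.sum_const_zero]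
            refine mul_nonneg hR ?_
            split_ifs
            · exact pot_nonneg _ _ _ _
            · exact le_rfl
      _ = R * walksE (A := A) G t (fun x => if LightBefore G β x t then pot η s x t else 0) :=
          walksE_const_mul _ _ _
      _ ≤ R * _ := mul_le_mul_of_nonneg_left ih hR
      _ = _ := by rw [pow_succ]; ring

end Moment

end Rumor
namespace Rumor

/-! ### Swapping coordinates along a partial matching -/

section Swap

variable {α β : Type}

/-- The map of `α ⊕ β` exchanging the two ends of each pair related by `r`; it is meaningful
when each element is related to at most one other. -/
def swapAlong (r : α → β → Prop) : α ⊕ β → α ⊕ β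
  | Sum.inl a => if h : ∃ b, r a b then Sum.inr h.choose else Sum.inl a
  | Sum.inr b => if h : ∃ a, r a b then Sum.inl h.choose else Sum.inr b

variable {r : α → β → Prop}

lemma swapAlong_inl (hl : ∀ a b b', r a b → r a b' → b = b') {a : α} {b : β} (h : r a b) :
    swapAlong r (Sum.inl a) = Sum.inr b := by
  have h' : ∃ b, r a b := ⟨b, h⟩
  simp only [swapAlong, h', dif_pos]
  rw [hl a _ b h'.choose_spec h]

lemma swapAlong_inr (hr : ∀ a a' b, r a b → r a' b → a = a') {a : α} {b : β} (h : r a b) :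
    swapAlong r (Sum.inr b) = Sum.inl a := by
  have h' : ∃ a, r a b := ⟨a, h⟩
  simp only [swapAlong, h', dif_pos]
  rw [hr _ a b h'.choose_spec h]

lemma swapAlong_involutive (hl : ∀ a b b', r a b → r a b' → b = b')
    (hr : ∀ a a' b, r a b → r a' b → a = a') : Function.Involutive (swapAlong r) := by
  rintro (a | b)
  · by_cases h : ∃ b, r a b
    · obtain ⟨b, hb⟩ := h
      rw [swapAlong_inl hl hb, swapAlong_inr hr hb]
    · have : swapAlong r (Sum.inl a) = Sum.inl a := by
        simp only [swapAlong, h, dif_neg, not_false_iff]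
      rw [this, this]
  · by_cases h : ∃ a, r a b
    · obtain ⟨a, ha⟩ := h
      rw [swapAlong_inr hr ha, swapAlong_inl hl ha]
    · have : swapAlong r (Sum.inr b) = Sum.inr b := by
        simp only [swapAlong, h, dif_neg, not_false_iff]
      rw [this, this]

lemma base_swapAlong {V : Type} (f : α ⊕ β → V)
    (hf : ∀ a b, r a b → f (Sum.inl a) = f (Sum.inr b)) (i : α ⊕ β) :
    f (swapAlong r i) = f i := by
  rcases i with a | b
  · by_cases h : ∃ b, r a b
    · simp only [swapAlong, h, dif_pos]
      exact (hf _ _ h.choose_spec).symm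
    · simp only [swapAlong, h, dif_neg, not_false_iff]
  · by_cases h : ∃ a, r a b
    · simp only [swapAlong, h, dif_pos]
      exact hf _ _ h.choose_spec
    · simp only [swapAlong, h, dif_neg, not_false_iff]

end Swap

/-! ### The coupling of push and visit-exchange -/

section Coupling

variable {V : Type} {a k L : ℕ}

/-- Number of agents of smaller index at the same vertex. -/
def rankAt (x : Fin a → ℕ → V) (t : ℕ) (g : Fin a) : ℕ := #{g' | g' < g ∧ x g' t = x g t}

/-- The index `j` such that the sample in push round `j + 1` of the vertex where agent `g` is at
time `t` is identified with the next step of `g`. -/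
def slot (s : V) (x : Fin a → ℕ → V) (t : ℕ) (g : Fin a) : ℕ :=
  counter s x t (x g t) + rankAt x t g

/-- The coordinate `(j, u)` of the push noise (sample of `u` in round `j + 1`) is matched with the
coordinate `(t, g, u)` of the agent noise (step of `g` out of `u` in round `t + 1`) when `g` really
leaves `u` at that time, `u` is informed, and `j` is the slot of this departure. -/
def Matched (s : V) (x : Fin a → ℕ → V) (q : Fin L × V) (e : Fin k × Fin a × V) : Prop :=
  q.2 = e.2.2 ∧ x e.2.1 e.1 = e.2.2 ∧ e.2.2 ∈ visInf s x e.1 ∧ (q.1 : ℕ) = slot s x e.1 e.2.1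

lemma rankAt_lt_occ (x : Fin a → ℕ → V) (t : ℕ) (g : Fin a) :
    rankAt x t g < occ x t (x g t) := by
  apply Finset.card_lt_card
  refine ⟨fun g' hg' => ?_, fun h => ?_⟩
  · simp only [Finset.mem_filter, Finset.mem_univ, true_and] at hg' ⊢
    exact hg'.2
  · have : g ∈ ({g' | g' < g ∧ x g' t = x g t} : Finset (Fin a)) := h (by simp)
    simp at this

lemma rankAt_lt (x : Fin a → ℕ → V) (t : ℕ) {g g' : Fin a} (hx : x g t = x g' t) (h : g < g') :
    rankAt x t g < rankAt x t g' := by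
  apply Finset.card_lt_card
  refine ⟨fun g₁ hg₁ => ?_, fun h' => ?_⟩
  · simp only [Finset.mem_filter, Finset.mem_univ, true_and] at hg₁ ⊢
    exact ⟨hg₁.1.trans h, hg₁.2.trans hx⟩
  · have : g ∈ ({g₁ | g₁ < g ∧ x g₁ t = x g t} : Finset (Fin a)) := h' (by simp [h, hx])
    simp at this

lemma visInf_mono (s : V) (x : Fin a → ℕ → V) {t t' : ℕ} (h : t ≤ t') :
    visInf s x t ⊆ visInf s x t' := by
  induction t', h using Nat.le_induction with
  | base => exact subset_rfl
  | succ m _ ih => exact ih.trans Set.subset_union_left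

lemma counter_add_occ_le (s : V) (x : Fin a → ℕ → V) {t t' : ℕ} (h : t < t') {v : V}
    (hv : v ∈ visInf s x t) : counter s x t v + occ x t v ≤ counter s x t' v := by
  induction t', h using Nat.le_induction with
  | base => simp [counter, hv]
  | succ m hm ih =>
    have hm' : t ≤ m := by omega
    have := visInf_mono s x hm' hv
    simp only [counter, this, if_true]
    omega

lemma matched_left (s : V) (x : Fin a → ℕ → V) (q : Fin L × V) (e e' : Fin k × Fin a × V)
    (h : Matched s x q e) (h' : Matched s x q e') : e = e' := by
  obtain ⟨j, u⟩ := q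
  obtain ⟨t, g, v⟩ := e
  obtain ⟨t', g', v'⟩ := e'
  obtain ⟨h1, h2, h3, h4⟩ := h
  obtain ⟨h1', h2', h3', h4'⟩ := h'
  simp only at h1 h2 h3 h4 h1' h2' h3' h4'
  subst h1 h1'
  have h5 := rankAt_lt_occ x t g
  have h5' := rankAt_lt_occ x t' g'
  rw [h4] at h4'
  simp only [slot, h2, h2'] at h4' h5 h5'
  rcases lt_trichotomy (t : ℕ) (t' : ℕ) with ht | ht | ht
  · have := counter_add_occ_le s x ht h3
    omega
  · have ht' : t = t' := Fin.ext ht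
    subst ht'
    rcases lt_trichotomy g g' with hg | hg | hg
    · have := rankAt_lt x t (h2.trans h2'.symm) hg
      omega
    · subst hg; rfl
    · have := rankAt_lt x t (h2'.trans h2.symm) hg
      omega
  · have := counter_add_occ_le s x ht h3'
    omega

lemma matched_right (s : V) (x : Fin a → ℕ → V) (q q' : Fin L × V) (e : Fin k × Fin a × V)
    (h : Matched s x q e) (h' : Matched s x q' e) : q = q' := by
  obtain ⟨h1, -, -, h4⟩ := h
  obtain ⟨h1', -, -, h4'⟩ := h'
  exact Prod.ext (Fin.ext (h4.trans h4'.symm)) (h1.trans h1'.symm)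

/-- The trajectories driven by the agent part of the joint noise. -/
def traj (x0 : Fin a → V) (ω : (Fin L × V) ⊕ (Fin k × Fin a × V) → V) : Fin a → ℕ → V :=
  walk x0 (extAV fun (t : Fin k) g v => ω (Sum.inr (t, g, v)))

/-- The push part of the joint noise. -/
def pushPart (ω : (Fin L × V) ⊕ (Fin k × Fin a × V) → V) : Fin L → V → V :=
  fun j u => ω (Sum.inl (j, u))

/-- The coupling map: exchange the values of the joint noise along the matching determined by the
trajectories. -/
def couple (s : V) (x0 : Fin a → V) (ω : (Fin L × V) ⊕ (Fin k × Fin a × V) → V) :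
    (Fin L × V) ⊕ (Fin k × Fin a × V) → V :=
  fun i => ω (swapAlong (Matched s (traj x0 ω)) i)

/-- The trajectories can be recovered, round by round, from the exchanged noise, since the
matching of the steps in round `t + 1` is determined by the trajectories up to time `t`. -/
lemma couple_injective (s : V) (x0 : Fin a → V) :
    Function.Injective (couple (k := k) (L := L) s x0) := by
  intro ω₁ ω₂ h
  have hinv : ∀ (ω : (Fin L × V) ⊕ (Fin k × Fin a × V) → V) i,
      ω i = couple s x0 ω (swapAlong (Matched s (traj x0 ω)) i) := by
    intro ω i
    rw [couple, swapAlong_involutive (matched_left s _) (matched_right s _)]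
  have hx : ∀ t, ∀ i ≤ t, ∀ g, traj x0 ω₁ g i = traj x0 ω₂ g i := by
    intro t
    induction t with
    | zero =>
      intro i hi g
      obtain rfl : i = 0 := by omega
      rfl
    | succ t ih =>
      intro i hi g
      rcases Nat.lt_or_ge i (t + 1) with hi' | hi'
      · exact ih i (by omega) g
      obtain rfl : i = t + 1 := by omega
      have hpos := ih t le_rfl g
      by_cases ht : t < k
      · have e : ∀ ω : (Fin L × V) ⊕ (Fin k × Fin a × V) → V, traj x0 ω g (t + 1) =
            ω (Sum.inr (⟨t, ht⟩, g, traj x0 ω g t)) := by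
          intro ω
          simp only [traj, walk]
          conv_lhs => rw [extAV]
          simp only [ht, dif_pos]
        rw [e, e, ← hpos, hinv ω₁, hinv ω₂, h]
        congr 1
        have hm : ∀ q : Fin L × V, Matched s (traj x0 ω₁) q (⟨t, ht⟩, g, traj x0 ω₁ g t) ↔
            Matched s (traj x0 ω₂) q (⟨t, ht⟩, g, traj x0 ω₁ g t) := by
          intro q
          have h1 := visInf_congr s (x := traj x0 ω₁) (y := traj x0 ω₂) (t := t)
            fun g i hi => ih i hi g
          have h2 := counter_congr s (x := traj x0 ω₁) (y := traj x0 ω₂) (t := t)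
            fun g i hi => ih i hi g
          have h3 : ∀ g, traj x0 ω₁ g t = traj x0 ω₂ g t := ih t le_rfl
          simp only [Matched, slot, rankAt, h1, h2, h3]
        simp only [swapAlong, hm]
      · have e : ∀ ω : (Fin L × V) ⊕ (Fin k × Fin a × V) → V, traj x0 ω g (t + 1) =
            traj x0 ω g t := by
          intro ω
          simp only [traj, walk]
          conv_lhs => rw [extAV]
          simp only [ht, dif_neg, not_false_iff, id]
        rw [e, e, hpos]
  have hxx : traj x0 ω₁ = traj x0 ω₂ := by
    funext g t; exact hx t t le_rfl g
  funext i
  rw [hinv ω₁, hinv ω₂, h, hxx]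

/-- Under the coupling, a vertex informed in visit-exchange is informed in push by the round given
by its counter. -/
lemma mem_pushInf_of_mem_visInf (s : V) (x0 : Fin a → V)
    (ω : (Fin L × V) ⊕ (Fin k × Fin a × V) → V) {t : ℕ} (ht : t ≤ k) {v : V}
    (hv : v ∈ visInf s (traj x0 ω) t) (hc : counter s (traj x0 ω) t v ≤ L) :
    v ∈ pushInf s (extV (pushPart (couple s x0 ω))) (counter s (traj x0 ω) t v) := by
  induction t generalizing v with
  | zero => exact hv
  | succ t ih =>
    by_cases hvt : v ∈ visInf s (traj x0 ω) t
    · have hle : counter s (traj x0 ω) t v ≤ counter s (traj x0 ω) (t + 1) v := by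
        have := counter_add_occ_le s (traj x0 ω) (show t < t + 1 by omega) hvt
        omega
      exact pushInf_mono s _ hle (ih (by omega) hvt (hle.trans hc))
    · obtain ⟨g, hg, hgv⟩ : ∃ g, traj x0 ω g t ∈ visInf s (traj x0 ω) t ∧
          traj x0 ω g (t + 1) = v := by
        rcases hv with hv | hv
        · exact absurd hv hvt
        · exact hv
      set x := traj x0 ω with hx
      have hle : counter s x t (x g t) + occ x t (x g t) ≤ counter s x (t + 1) v := by
        simp only [counter, hvt, if_false]
        exact Finset.le_sup (f := fun g => counter s x t (x g t) + occ x t (x g t))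
          (by simpa using ⟨hg, hgv⟩)
      have hrk := rankAt_lt_occ x t g
      have hslot : slot s x t g < L := by unfold slot; omega
      have hu := ih (by omega) hg (by omega)
      have hu' : x g t ∈ pushInf s (extV (pushPart (couple s x0 ω))) (slot s x t g) :=
        pushInf_mono s _ (by unfold slot; omega) hu
      have hm : Matched s x ((⟨slot s x t g, hslot⟩, x g t) : Fin L × V)
          ((⟨t, ht⟩, g, x g t) : Fin k × Fin a × V) := ⟨rfl, rfl, hg, rfl⟩
      have hval : extV (pushPart (couple s x0 ω)) (slot s x t g) (x g t) = v := by
        simp only [extV, hslot, dif_pos, pushPart, couple]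
        rw [← hx, swapAlong_inl (matched_left s x) hm, ← hgv, hx]
        simp only [traj, walk]
        conv_rhs => rw [extAV]
        have htk : t < k := ht
        simp only [htk, dif_pos]
      have : v ∈ pushInf s (extV (pushPart (couple s x0 ω))) (slot s x t g + 1) :=
        Or.inr ⟨x g t, hu', hval⟩
      exact pushInf_mono s _ (by unfold slot; omega) this

variable [Fintype V] {G : SimpleGraph V} {d : ℕ}

/-- The vertex whose neighbours a noise coordinate samples. -/
def baseOf : (Fin L × V) ⊕ (Fin k × Fin a × V) → V :=
  Sum.elim (fun q => q.2) (fun e => e.2.2)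

/-- The weight of the joint noise. -/
def jointW (G : SimpleGraph V) (ω : (Fin L × V) ⊕ (Fin k × Fin a × V) → V) : ℝ :=
  ∏ i, nbrW G (baseOf i) (ω i)

lemma jointW_nonneg (ω : (Fin L × V) ⊕ (Fin k × Fin a × V) → V) : 0 ≤ jointW G ω :=
  Finset.prod_nonneg fun _ _ => nbrW_nonneg G _ _

lemma jointW_couple (s : V) (x0 : Fin a → V) (ω : (Fin L × V) ⊕ (Fin k × Fin a × V) → V) :
    jointW G (couple s x0 ω) = jointW G ω := by
  set r : Fin L × V → Fin k × Fin a × V → Prop := Matched s (traj x0 ω) with hr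
  have hinv : Function.Involutive (swapAlong r) :=
    swapAlong_involutive (matched_left s _) (matched_right s _)
  have hb : ∀ i, baseOf (swapAlong r i) = baseOf i :=
    base_swapAlong baseOf fun q e h => h.1
  unfold jointW
  rw [← Equiv.prod_comp hinv.toPerm fun i => nbrW G (baseOf i) (ω i)]
  refine Finset.prod_congr rfl fun i _ => ?_
  simp only [Function.Involutive.coe_toPerm, hb, couple, ← hr]

lemma joint_coupling (s : V) (x0 : Fin a → V) :
    (∑ ω : (Fin L × V) ⊕ (Fin k × Fin a × V) → V, jointW G ω *
      if visInf s (traj x0 ω) k = Set.univ ∧ ∀ v, counter s (traj x0 ω) k v ≤ L then 1 else 0) ≤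
    ∑ ω : (Fin L × V) ⊕ (Fin k × Fin a × V) → V, jointW G ω *
      if pushInf s (extV (pushPart ω)) L = Set.univ then 1 else 0 := by
  rw [← (Finite.injective_iff_bijective.1 (couple_injective s x0)).sum_comp
    fun ω : (Fin L × V) ⊕ (Fin k × Fin a × V) → V => jointW G ω *
      if pushInf s (extV (pushPart ω)) L = Set.univ then 1 else 0]
  refine Finset.sum_le_sum fun ω _ => ?_
  rw [jointW_couple]
  refine mul_le_mul_of_nonneg_left ?_ (jointW_nonneg ω)
  by_cases h : visInf s (traj x0 ω) k = Set.univ ∧ ∀ v, counter s (traj x0 ω) k v ≤ L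
  · rw [if_pos h, if_pos]
    apply Set.eq_univ_of_forall
    intro v
    have hv : v ∈ visInf s (traj x0 ω) k := h.1 ▸ Set.mem_univ v
    exact pushInf_mono s _ (h.2 v) (mem_pushInf_of_mem_visInf s x0 ω le_rfl hv (h.2 v))
  · rw [if_neg h]
    split_ifs <;> norm_num

/-- The joint noise as a pair of push noise and agent noise. -/
def jointEquiv : ((Fin L → V → V) × (Fin k → Fin a → V → V)) ≃
    ((Fin L × V) ⊕ (Fin k × Fin a × V) → V) where
  toFun z := Sum.elim (fun q => z.1 q.1 q.2) (fun e => z.2 e.1 e.2.1 e.2.2)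
  invFun ω := (pushPart ω, fun t g v => ω (Sum.inr (t, g, v)))
  left_inv z := rfl
  right_inv ω := by funext i; rcases i with i | i <;> rfl

lemma sum_joint (F : (Fin L → V → V) → (Fin k → Fin a → V → V) → ℝ) :
    ∑ ω : (Fin L × V) ⊕ (Fin k × Fin a × V) → V, jointW G ω *
      F (pushPart ω) (fun t g v => ω (Sum.inr (t, g, v))) =
    ∑ p : Fin L → V → V, ∑ σ : Fin k → Fin a → V → V,
      (∏ j, ∏ v, nbrW G v (p j v)) * (∏ t, ∏ g, ∏ v, nbrW G v (σ t g v)) * F p σ := by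
  rw [← Equiv.sum_comp jointEquiv, Fintype.sum_prod_type]
  refine Finset.sum_congr rfl fun p _ => Finset.sum_congr rfl fun σ _ => ?_
  have : jointW G (jointEquiv (p, σ)) =
      (∏ j, ∏ v, nbrW G v (p j v)) * (∏ t, ∏ g, ∏ v, nbrW G v (σ t g v)) := by
    unfold jointW
    rw [Fintype.prod_sum_type, Fintype.prod_prod_type, Fintype.prod_prod_type]
    simp only [Fintype.prod_prod_type]
    rfl
  rw [this]
  rfl

lemma sum_agent_noise (hd : G.IsRegularOfDegree d) (hd0 : 0 < d) :
    ∑ σ : Fin k → Fin a → V → V, (∏ t, ∏ g, ∏ v, nbrW G v (σ t g v)) = 1 := by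
  rw [← Fintype.prod_sum (fun (_ : Fin k) (τ : Fin a → V → V) => ∏ g, ∏ v, nbrW G v (τ g v))]
  simp [sum_noise hd hd0]

/-- The probability that visit-exchange finishes within `k` rounds with all counters at most `L`
is at most the probability that push finishes within `L` rounds. -/
lemma walksE_le_pushProbLe (hd : G.IsRegularOfDegree d) (hd0 : 0 < d) [Nonempty V] (s : V) :
    walksE (A := Fin a) G k (fun x =>
      if visInf s x k = Set.univ ∧ ∀ v, counter s x k v ≤ L then 1 else 0) ≤ pushProbLe G s L := by
  have key : ∀ x0 : Fin a → V, ∑ σ : Fin k → Fin a → V → V, (∏ t, ∏ g, ∏ v, nbrW G v (σ t g v)) *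
      (if visInf s (walk x0 (extAV σ)) k = Set.univ ∧
        ∀ v, counter s (walk x0 (extAV σ)) k v ≤ L then 1 else 0) ≤ pushProbLe G s L := by
    intro x0
    have h := joint_coupling (G := G) (k := k) (L := L) s x0
    have e1 := sum_joint (G := G) (k := k) (a := a) (L := L) fun _ σ =>
      if visInf s (walk x0 (extAV σ)) k = Set.univ ∧
        ∀ v, counter s (walk x0 (extAV σ)) k v ≤ L then 1 else 0
    have e2 := sum_joint (G := G) (k := k) (a := a) (L := L) fun p _ =>
      if pushInf s (extV p) L = Set.univ then 1 else 0
    have h' := (e1.symm.le.trans h).trans e2.le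
    have e3 : ∑ p : Fin L → V → V, ∑ σ : Fin k → Fin a → V → V,
        (∏ j, ∏ v, nbrW G v (p j v)) * (∏ t, ∏ g, ∏ v, nbrW G v (σ t g v)) *
          (if pushInf s (extV p) L = Set.univ then (1 : ℝ) else 0) = pushProbLe G s L := by
      unfold pushProbLe
      refine Finset.sum_congr rfl fun p _ => ?_
      rw [← Finset.sum_mul, ← Finset.mul_sum, sum_agent_noise hd hd0]
      split_ifs <;> simp
    rw [e3] at h'
    refine le_trans (le_of_eq ?_) h'
    simp only [mul_assoc]
    simp only [← Finset.mul_sum]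
    rw [← Finset.sum_mul, sum_noise hd hd0, one_mul]
  have hstat : ∑ x0 : Fin a → V, ∏ g, statW G (x0 g) = 1 := by
    rw [← Fintype.prod_sum (fun (_ : Fin a) v => statW G v)]
    simp [statW_eq hd hd0]
  have hP : ∑ x0 : Fin a → V, (∏ g, statW G (x0 g)) * pushProbLe G s L = pushProbLe G s L := by
    rw [← Finset.sum_mul, hstat, one_mul]
  have hE : walksE (A := Fin a) G k (fun x =>
      if visInf s x k = Set.univ ∧ ∀ v, counter s x k v ≤ L then 1 else 0) =
      ∑ x0 : Fin a → V, (∏ g, statW G (x0 g)) *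
        ∑ σ : Fin k → Fin a → V → V, (∏ t, ∏ g, ∏ v, nbrW G v (σ t g v)) *
          (if visInf s (walk x0 (extAV σ)) k = Set.univ ∧
            ∀ v, counter s (walk x0 (extAV σ)) k v ≤ L then 1 else 0) := by
    unfold walksE
    simp only [Finset.mul_sum, mul_assoc]
    congr!
  rw [hE, ← hP]
  exact Finset.sum_le_sum fun x0 _ => mul_le_mul_of_nonneg_left (key x0)
    (Finset.prod_nonneg fun g _ => statW_nonneg G (x0 g))

end Coupling

end Rumor
namespace Rumor

/-! ### Comparison of the broadcast times -/

section Final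

variable {V : Type} [Fintype V] {G : SimpleGraph V} {d : ℕ}

lemma vxProbLe_eq (s : V) (a k : ℕ) :
    vxProbLe G s a k =
      walksE (A := Fin a) G k fun x => if visInf s x k = Set.univ then 1 else 0 := by
  unfold vxProbLe
  rw [walksProb_eq]
  simp only [(vxInf_eq s _ k).1]

lemma vxProbLe_le_one (hd : G.IsRegularOfDegree d) (hd0 : 0 < d) [Nonempty V] (s : V) (a k : ℕ) :
    vxProbLe G s a k ≤ 1 := by
  rw [vxProbLe_eq]
  refine (walksE_mono (F' := fun _ => 1) ?_).trans (walksE_one (A := Fin a) hd hd0 k).le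
  intro x
  split_ifs <;> norm_num

lemma nbrW_le_one (u v : V) : nbrW G u v ≤ 1 := by
  unfold nbrW
  split_ifs with h
  · have h1 : 0 < G.degree u := (G.degree_pos_iff_exists_adj u).2 ⟨v, h⟩
    have h2 : (1 : ℝ) ≤ G.degree u := by exact_mod_cast h1
    rw [div_le_one (by linarith)]
    exact h2
  · norm_num

lemma statW_le_one (v : V) : statW G v ≤ 1 := by
  unfold statW
  refine div_le_one_of_le₀ ?_ (by positivity)
  exact Finset.single_le_sum (f := fun u => (G.degree u : ℝ)) (fun _ _ => by positivity)
    (Finset.mem_univ v)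

/-- On a single vertex there is only one trajectory, so the bound holds although the weights of
the (nonexistent) neighbours do not sum to one. -/
lemma walksProb_le_one_of_subsingleton {A : Type} [Fintype A] [Subsingleton V] (s : V) (k : ℕ)
    (E : (A → ℕ → V) → Prop) : walksProb G k E ≤ 1 := by
  unfold walksProb
  rw [Fintype.sum_subsingleton _ (fun _ => s), Fintype.sum_subsingleton _ (fun _ _ _ => s)]
  have hs : ∀ v, 0 ≤ statW G v := fun v => by unfold statW; positivity
  have hw := nbrW_nonneg G
  split_ifs
  · refine mul_le_one₀ (Finset.prod_le_one (fun _ _ => hs _) fun _ _ => statW_le_one _)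
      (Finset.prod_nonneg fun _ _ => Finset.prod_nonneg fun _ _ => Finset.prod_nonneg
        fun _ _ => hw _ _) ?_
    refine Finset.prod_le_one (fun _ _ => Finset.prod_nonneg fun _ _ => Finset.prod_nonneg
      fun _ _ => hw _ _) fun _ _ => ?_
    refine Finset.prod_le_one (fun _ _ => Finset.prod_nonneg fun _ _ => hw _ _) fun _ _ => ?_
    exact Finset.prod_le_one (fun _ _ => hw _ _) fun _ _ => nbrW_le_one _ _
  · norm_num

lemma vxProbLe_zero (s : V) (a : ℕ) (hV : 1 < Fintype.card V) : vxProbLe G s a 0 = 0 := by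
  rw [vxProbLe_eq]
  have : ∀ x : Fin a → ℕ → V, visInf s x 0 ≠ Set.univ := by
    intro x h
    have h1 : (visInf s x 0).ncard = 1 := Set.ncard_singleton s
    rw [h, Set.ncard_univ, Nat.card_eq_fintype_card] at h1
    omega
  simp [this, walksE]

/-- If visit-exchange is finished after `k` rounds, then all counters are at most `L`, or the
potential is at least `exp (η * L)`, or some round has a heavy load; the three terms bound the
probabilities of these events. -/
lemma vxProbLe_le (hd : G.IsRegularOfDegree d) (hd0 : 0 < d) [Nonempty V] {η α β : ℝ}
    (hη : 0 ≤ η) (s : V) (a k L : ℕ) (hA : (a : ℝ) ≤ α * Fintype.card V) :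
    vxProbLe G s a k ≤ pushProbLe G s L +
      Real.exp (-(η * L)) * (Real.exp (Real.exp (η + 1) * α) *
        (Real.exp (η + 1) * Real.exp (Real.exp (η + 1) * β)) ^ k) +
      k * (Fintype.card V * Real.exp (-(β - 2 * α) * d)) := by
  have hA' : (Fintype.card (Fin a) : ℝ) ≤ α * Fintype.card V := by simpa using hA
  have hpt : ∀ x : Fin a → ℕ → V, (if visInf s x k = Set.univ then (1 : ℝ) else 0) ≤
      ((if visInf s x k = Set.univ ∧ ∀ v, counter s x k v ≤ L then 1 else 0) +
        Real.exp (-(η * L)) * (if LightBefore G β x k then pot η s x k else 0)) +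
      ∑ i ∈ Finset.range k, (if Light G β (fun g => x g i) then 0 else 1) := by
    intro x
    have n1 : (0 : ℝ) ≤ (if visInf s x k = Set.univ ∧ ∀ v, counter s x k v ≤ L then 1 else 0) := by
      split_ifs <;> norm_num
    have n2 : 0 ≤ Real.exp (-(η * L)) * (if LightBefore G β x k then pot η s x k else 0) := by
      refine mul_nonneg (by positivity) ?_
      split_ifs
      · exact pot_nonneg _ _ _ _
      · exact le_rfl
    have n3' : ∀ i ∈ Finset.range k,
        (0 : ℝ) ≤ (if Light G β (fun g => x g i) then 0 else 1) := fun i _ => by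
      split_ifs <;> norm_num
    have n3 := Finset.sum_nonneg n3'
    by_cases hu : visInf s x k = Set.univ
    · rw [if_pos hu]
      by_cases hc : ∀ v, counter s x k v ≤ L
      · rw [if_pos ⟨hu, hc⟩]; linarith
      by_cases hl : LightBefore G β x k
      · push Not at hc
        obtain ⟨v, hv⟩ := hc
        rw [if_pos hl] at n2 ⊢
        have h1 : Real.exp (η * L) ≤ pot η s x k := by
          refine le_trans ?_ (Finset.single_le_sum (f := fun v => if v ∈ visInf s x k then
            Real.exp (η * counter s x k v) * Real.exp ((η + 1) * occ x k v) else 0)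
            (fun v _ => by split_ifs <;> positivity) (Finset.mem_univ v))
          simp only [hu, Set.mem_univ, if_true]
          rw [← Real.exp_add]
          apply Real.exp_le_exp.2
          have h2 : (L : ℝ) ≤ counter s x k v := by exact_mod_cast hv.le
          have h3 : 0 ≤ (η + 1) * occ x k v := by positivity
          nlinarith
        have h4 : 1 ≤ Real.exp (-(η * L)) * pot η s x k := by
          calc (1 : ℝ) = Real.exp (-(η * L)) * Real.exp (η * L) := by
                rw [← Real.exp_add]; simp
            _ ≤ _ := by gcongr
        linarith
      · unfold LightBefore at hl
        push Not at hl
        obtain ⟨i, hi, hli⟩ := hl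
        have h1 := Finset.single_le_sum n3' (Finset.mem_range.2 hi)
        rw [if_neg hli] at h1
        linarith
    · rw [if_neg hu]; linarith
  rw [vxProbLe_eq]
  refine (walksE_mono hpt).trans ?_
  rw [walksE_add, walksE_add, walksE_const_mul, walksE_sum]
  refine add_le_add (add_le_add (walksE_le_pushProbLe hd hd0 s) ?_) ?_
  · exact mul_le_mul_of_nonneg_left (walksE_pot_le hd hd0 hη hA' s k) (by positivity)
  · rw [← nsmul_eq_mul]
    conv_rhs => rw [← Finset.card_range k]
    refine Finset.sum_le_card_nsmul _ _ _ fun i hi => ?_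
    obtain ⟨m, rfl⟩ : ∃ m, k = i + m := ⟨k - i, by have := Finset.mem_range.1 hi; omega⟩
    rw [walksE_horizon hd hd0 i m _ fun x y h => by simp only [h _ i le_rfl]]
    exact walksE_not_light hd hd0 hA' i

end Final

end Rumor

/-- For any constants `ε, α, λ > 0` there is a constant `c > 0` such
that for every connected `d`-regular graph `G` on `n` vertices with `d ≥ ε log n`,
every source `s`, every number of agents `|A| ≤ α n` and every `k ≥ 0`,
`P[T_push(G,s) ≤ c k] ≥ P[T_visitx(G,s) ≤ k] − n^{−λ}`. -/
theorem push_le_visitx_regular (ε α lam : ℝ) (hε : 0 < ε) (hα : 0 < α) (hlam : 0 < lam) :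
    ∃ c : ℝ, 0 < c ∧
      ∀ (V : Type) [Fintype V] (G : SimpleGraph V) (n d : ℕ),
        n = Fintype.card V → G.Connected → G.IsRegularOfDegree d →
        ε * Real.log n ≤ (d : ℝ) →
        ∀ (s : V) (a : ℕ), (a : ℝ) ≤ α * n →
        ∀ k : ℕ,
          Rumor.vxProbLe G s a k - (n : ℝ) ^ (-lam) ≤ Rumor.pushProbLe G s ⌊c * k⌋₊ := by
  -- As push may be given `L ≥ (log n) / 2` rounds, `η` makes `exp (-(η * L) / 2)` at most
  -- `n ^ (-(lam + 1))`; `β` makes a heavy load at a given vertex and time as unlikely as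
  -- `n ^ (-(lam + 4))`.
  obtain ⟨η, hη⟩ : ∃ η, η = 4 * (lam + 1) := ⟨_, rfl⟩
  obtain ⟨β, hβ⟩ : ∃ β, β = 2 * α + (lam + 4) / ε := ⟨_, rfl⟩
  obtain ⟨ρ, hρ⟩ : ∃ ρ, ρ = Real.exp (η + 1) * α + (η + 1) + Real.exp (η + 1) * β := ⟨_, rfl⟩
  obtain ⟨c, hc⟩ : ∃ c, c = 4 * ρ / η + 8 * (1 + lam) := ⟨_, rfl⟩
  have hη0 : 0 < η := by rw [hη]; positivity
  have hβ0 : 0 < β := by rw [hβ]; positivity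
  have hρ0 : 0 < ρ := by rw [hρ]; positivity
  have hc8 : 8 * (1 + lam) ≤ c := by
    have : 0 < 4 * ρ / η := by positivity
    linarith
  have hcρ : 4 * ρ ≤ η * c := by
    have h1 : 4 * ρ / η ≤ c := by linarith
    rw [div_le_iff₀ hη0] at h1
    linarith
  refine ⟨c, by linarith, ?_⟩
  intro V _ G n d hn hG hd hdn s a ha k
  have : Nonempty V := ⟨s⟩
  have hn0 : 0 < n := hn ▸ Fintype.card_pos
  rcases Nat.lt_or_ge n 2 with hn2 | hn2
  · -- a single vertex: the error term is `1`
    obtain rfl : n = 1 := by omega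
    have hcard : Fintype.card V = 1 := hn.symm
    have h1 : Rumor.vxProbLe G s a k ≤ 1 := by
      have hsub : Subsingleton V := Fintype.card_le_one_iff_subsingleton.1 hcard.le
      exact Rumor.walksProb_le_one_of_subsingleton s k _
    have h2 := Rumor.pushProbLe_nonneg (G := G) s ⌊c * k⌋₊
    simp only [Nat.cast_one, Real.one_rpow]
    linarith
  have hd0 : 0 < d := by
    have hs : ({s} : Set V) ≠ Set.univ := by
      intro h
      have h1 := Set.ncard_singleton s
      rw [h, Set.ncard_univ, Nat.card_eq_fintype_card] at h1
      omega
    obtain ⟨u, -, v, -, huv⟩ := Rumor.exists_adj_boundary hG (Set.singleton_nonempty s) hs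
    rw [← hd u]
    exact (G.degree_pos_iff_exists_adj u).2 ⟨v, huv⟩
  have hnR : (2 : ℝ) ≤ n := by exact_mod_cast hn2
  have hnpos : (0 : ℝ) < n := by linarith
  have hrpow : (n : ℝ) ^ (-lam) = Real.exp (-lam * Real.log n) := by
    rw [Real.rpow_def_of_pos hnpos, mul_comm]
  have hlog0 : 0 ≤ Real.log n := Real.log_nonneg (by linarith)
  rcases Nat.eq_zero_or_pos k with hk0 | hk0
  · subst hk0
    rw [Rumor.vxProbLe_zero s a (by omega)]
    have h2 := Rumor.pushProbLe_nonneg (G := G) s ⌊c * (0 : ℕ)⌋₊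
    have h3 : 0 < (n : ℝ) ^ (-lam) := by positivity
    linarith
  have hkR : (1 : ℝ) ≤ k := by exact_mod_cast hk0
  obtain ⟨K, hK⟩ : ∃ K, K = ⌊c * (k : ℝ)⌋₊ := ⟨_, rfl⟩
  have hck : 2 ≤ c * k := by nlinarith
  have hKc : c * k / 2 ≤ K := by
    have := Nat.lt_floor_add_one (c * (k : ℝ))
    rw [← hK] at this
    linarith
  rw [← hK]
  rcases Nat.lt_or_ge k (n ^ 2) with hkn | hkn
  · obtain ⟨L, hL⟩ : ∃ L, L = max K (Nat.clog 2 n - 1) := ⟨_, rfl⟩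
    have hKL : K ≤ L := hL ▸ le_max_left _ _
    have hcL : Nat.clog 2 n - 1 ≤ L := hL ▸ le_max_right _ _
    have hpush : Rumor.pushProbLe G s L ≤ Rumor.pushProbLe G s K := by
      rcases max_choice K (Nat.clog 2 n - 1) with h | h
      · rw [hL, h]
      · -- push cannot finish before round `log₂ n`, as the informed set at most doubles
        rw [hL, h, Rumor.pushProbLe_eq_zero]
        · exact Rumor.pushProbLe_nonneg _ _
        · rw [← hn]
          exact Nat.pow_pred_clog_lt_self (by norm_num) hn2
    have hK1 : 1 ≤ K := by
      have : (1 : ℝ) ≤ K := by linarith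
      exact_mod_cast this
    have hlogL : Real.log n ≤ 2 * L := by
      have h1 : n ≤ 2 ^ Nat.clog 2 n := Nat.le_pow_clog (by norm_num) n
      have h2 : (n : ℝ) ≤ 2 ^ Nat.clog 2 n := by exact_mod_cast h1
      have h3 := Real.log_le_log hnpos h2
      rw [Real.log_pow] at h3
      have h4 : Real.log 2 ≤ 1 := by linarith [Real.log_two_lt_d9]
      have h5 : (Nat.clog 2 n : ℝ) ≤ 2 * L := by
        have : Nat.clog 2 n ≤ 2 * L := by omega
        exact_mod_cast this
      have h6 : (0 : ℝ) ≤ Nat.clog 2 n := by positivity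
      nlinarith
    have hmain := Rumor.vxProbLe_le (G := G) (β := β) hd hd0 hη0.le s a k L (by rw [← hn]; exact ha)
    have herr1 : Real.exp (-(η * L)) * (Real.exp (Real.exp (η + 1) * α) *
        (Real.exp (η + 1) * Real.exp (Real.exp (η + 1) * β)) ^ k) ≤
        Real.exp (-(lam + 1) * Real.log n) := by
      rw [← Real.exp_add, ← Real.exp_nat_mul, ← Real.exp_add, ← Real.exp_add]
      apply Real.exp_le_exp.2
      have hKL' : (K : ℝ) ≤ L := by exact_mod_cast hKL
      have h1 : Real.exp (η + 1) * α + k * (η + 1 + Real.exp (η + 1) * β) ≤ ρ * k := by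
        have : 0 ≤ Real.exp (η + 1) * α := by positivity
        rw [hρ]; nlinarith
      have h2 : ρ * k ≤ η * L / 2 := by
        have h3 : 4 * ρ * k ≤ η * c * k := by gcongr
        have h4 : η * (c * k / 2) ≤ η * L := by gcongr; linarith
        linarith
      have h5 : (lam + 1) * Real.log n ≤ η * L / 2 := by
        rw [hη]
        have : (lam + 1) * Real.log n ≤ (lam + 1) * (2 * L) := by gcongr
        linarith
      linarith
    have herr2 : (k : ℝ) * (Fintype.card V * Real.exp (-(β - 2 * α) * d)) ≤
        Real.exp (-(lam + 1) * Real.log n) := by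
      rw [← hn]
      have h1 : (k : ℝ) ≤ (n : ℝ) ^ 2 := by exact_mod_cast hkn.le
      have h2 : Real.exp (-(β - 2 * α) * d) ≤ Real.exp (-(lam + 4) * Real.log n) := by
        apply Real.exp_le_exp.2
        have h3 : (lam + 4) / ε * (ε * Real.log n) ≤ (lam + 4) / ε * d := by gcongr
        have h4 : (lam + 4) / ε * (ε * Real.log n) = (lam + 4) * Real.log n := by field_simp
        rw [hβ]
        linarith
      have h5 : (n : ℝ) ^ 3 = Real.exp (3 * Real.log n) := by
        rw [show (3 : ℝ) * Real.log n = (3 : ℕ) * Real.log n by norm_num, Real.exp_nat_mul,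
          Real.exp_log hnpos]
      calc (k : ℝ) * (n * Real.exp (-(β - 2 * α) * d))
          ≤ (n : ℝ) ^ 2 * (n * Real.exp (-(lam + 4) * Real.log n)) := by gcongr
        _ = (n : ℝ) ^ 3 * Real.exp (-(lam + 4) * Real.log n) := by ring
        _ = Real.exp (-(lam + 1) * Real.log n) := by
            rw [h5, ← Real.exp_add]; congr 1; ring
    have hhalf : 2 * Real.exp (-(lam + 1) * Real.log n) ≤ Real.exp (-lam * Real.log n) := by
      have h1 : Real.exp (-lam * Real.log n) = n * Real.exp (-(lam + 1) * Real.log n) := by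
        conv_rhs => rw [← Real.exp_log hnpos, Real.log_exp, ← Real.exp_add]
        congr 1; ring
      rw [h1]
      gcongr
    rw [hrpow]
    linarith
  · -- for `k ≥ n ^ 2` push is finished within `c * k` rounds by the crude bound
    have h1 := Rumor.pushProbLe_ge hG hd hd0 s K
    have h2 := Rumor.vxProbLe_le_one hd hd0 s a k
    have hdn' : (d : ℝ) ≤ n := by
      have := G.degree_lt_card_verts s
      rw [hd s, ← hn] at this
      exact_mod_cast this.le
    have hdR : (1 : ℝ) ≤ d := by exact_mod_cast hd0
    have h3 : 2 ^ Fintype.card V * (1 - 1 / (2 * (d : ℝ))) ^ K ≤ (n : ℝ) ^ (-lam) := by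
      rw [hrpow, ← hn]
      have h4 : (2 : ℝ) ^ n ≤ Real.exp n := by
        have : (2 : ℝ) ≤ Real.exp 1 := by linarith [Real.exp_one_gt_d9]
        calc (2 : ℝ) ^ n ≤ Real.exp 1 ^ n := by gcongr
          _ = Real.exp n := by rw [← Real.exp_nat_mul, mul_one]
      have h6 : 0 ≤ 1 - 1 / (2 * (d : ℝ)) := by
        rw [sub_nonneg, div_le_one (by positivity)]; linarith
      have h5 : (1 - 1 / (2 * (d : ℝ))) ^ K ≤ Real.exp (-(K / (2 * n))) := by
        have h7 : 1 - 1 / (2 * (d : ℝ)) ≤ Real.exp (-(1 / (2 * n))) := by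
          have h8 := Real.add_one_le_exp (-(1 / (2 * (n : ℝ))))
          have h9 : 1 / (2 * (n : ℝ)) ≤ 1 / (2 * (d : ℝ)) := by gcongr
          linarith
        calc _ ≤ Real.exp (-(1 / (2 * n))) ^ K := by gcongr
          _ = _ := by rw [← Real.exp_nat_mul]; congr 1; ring
      calc _ ≤ Real.exp n * Real.exp (-(K / (2 * n))) :=
            mul_le_mul h4 h5 (pow_nonneg h6 K) (Real.exp_pos _).le
        _ = Real.exp (n - K / (2 * n)) := by rw [← Real.exp_add]; congr 1
        _ ≤ _ := by
          apply Real.exp_le_exp.2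
          have h10 : (n : ℝ) ^ 2 ≤ k := by exact_mod_cast hkn
          have h11 : (2 + 2 * lam) * n ≤ K / (2 * n) := by
            rw [le_div_iff₀ (by positivity)]
            have h12 : 8 * (1 + lam) * (n : ℝ) ^ 2 ≤ c * k :=
              mul_le_mul hc8 h10 (by positivity) (by linarith)
            calc (2 + 2 * lam) * n * (2 * n) = 8 * (1 + lam) * (n : ℝ) ^ 2 / 2 := by ring
              _ ≤ c * k / 2 := by linarith
              _ ≤ K := hKc
          have h13 : Real.log n ≤ n := (Real.log_le_sub_one_of_pos hnpos).trans (by linarith)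
          have h14 : lam * Real.log n ≤ lam * n := mul_le_mul_of_nonneg_left h13 hlam.le
          have h15 : 0 ≤ lam * n := by positivity
          linarith
    linarith
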